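/- arXiv:1302.2638 — 2 statements merged into one kernel-verified Lean document; each statement's English description precedes it below -/
import Mathlib

section
/- Let n be a positive integer and let β₁, β₂ be real parameters with β₁ ≥ 0 and β₂ ≥ 0. For G drawn from the quaternion real anti-spherical ensemble of size 2n with parameters (β₁, β₂), and for every complex number z, ⟨det(z·I − G)⟩ = Σ_{j=0}^{n} z^{2(n−j)} · ∏_{i=1}^{j} (β₁ + n + 1 − i)/(β₁ + β₂ + 2n + 1/2 − i). Equivalently, the even-degree skew orthogonal polynomial is Q_{2n}(z) = (Γ(β₁+n+1)/Γ(2n+1/2+β₁+β₂)) · Σ_{j=0}^{n} (Γ(n+j+1/2+β₁+β₂)/Γ(j+1+β₁)) z^{2j}. -/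
open MeasureTheory Matrix
open scoped ComplexOrder

/-- The `2n × 2n` complex matrix (indexed by `Fin n × Fin 2`) whose `(j,k)`-th `2 × 2`
block is `[[z_{jk}, w_{jk}], [-conj w_{jk}, conj z_{jk}]]`. -/
noncomputable def quatMatrix (n : ℕ) (x : Fin n → Fin n → ℂ × ℂ) :
    Matrix (Fin n × Fin 2) (Fin n × Fin 2) ℂ :=
  Matrix.of fun a b =>
    if a.2 = 0 then
      (if b.2 = 0 then (x a.1 b.1).1 else (x a.1 b.1).2)
    else
      (if b.2 = 0 then -(starRingEnd ℂ) ((x a.1 b.1).2)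
        else (starRingEnd ℂ) ((x a.1 b.1).1))

/-- The (unnormalized) density of the quaternion real anti-spherical ensemble of size
`2n` with parameters `(β₁, β₂)`: `det(G† G)^{β₁} det(I - G† G)^{β₂}` on the set where
`I - G† G` is positive definite, and `0` elsewhere (the determinants are real, so we
take real parts). -/
noncomputable def quatAntiSphericalWeight (n : ℕ) (β₁ β₂ : ℝ) (x : Fin n → Fin n → ℂ × ℂ) : ℝ :=
  Set.indicator
    {x' : Fin n → Fin n → ℂ × ℂ | (1 - (quatMatrix n x')ᴴ * quatMatrix n x').PosDef}
    (fun x' => (((quatMatrix n x')ᴴ * quatMatrix n x').det.re) ^ β₁ *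
      ((1 - (quatMatrix n x')ᴴ * quatMatrix n x').det.re) ^ β₂) x

/-- The function `u ↦ u ^ c` on `u > 0`, extended by zero. -/
noncomputable def truncPow (c u : ℝ) : ℝ := if 0 < u then u ^ c else 0

lemma truncPow_nonneg (c u : ℝ) : 0 ≤ truncPow c u := by
  unfold truncPow
  split_ifs with h
  · exact Real.rpow_nonneg h.le c
  · exact le_rfl

lemma measurable_truncPow (c : ℝ) : Measurable (truncPow c) :=
  Measurable.ite measurableSet_Ioi (measurable_id.pow_const c) measurable_const

lemma lintegral_exp_neg_mul_truncPow {c : ℝ} (hc : 0 ≤ c) :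
    ∫⁻ u : ℝ, ENNReal.ofReal (Real.exp (-u) * truncPow c u) =
      ENNReal.ofReal (Real.Gamma (c + 1)) := by
  have h1 : 0 < c + 1 := by linarith
  rw [Real.Gamma_eq_integral h1, ofReal_integral_eq_lintegral_ofReal
    (Real.GammaIntegral_convergent h1), ← lintegral_indicator measurableSet_Ioi]
  · refine lintegral_congr fun u => ?_
    by_cases hu : 0 < u
    · simp [truncPow, hu]
    · simp [truncPow, hu]
  · filter_upwards [ae_restrict_mem measurableSet_Ioi] with u hu
    have : (0 : ℝ) < u := hu
    positivity

lemma LinearMap.hasDerivAt_det_one_add_smul {E : Type*} [NormedAddCommGroup E]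
    [NormedSpace ℝ E] [FiniteDimensional ℝ E] (L : E →ₗ[ℝ] E) :
    HasDerivAt (fun t : ℝ => LinearMap.det (1 + t • L)) (LinearMap.trace ℝ E L) 0 := by
  classical
  let b := Module.finBasis ℝ E
  let N := LinearMap.toMatrix b b L
  have h1 : ∀ t : ℝ, LinearMap.det (1 + t • L) =
      (Matrix.det (1 + (Polynomial.X : Polynomial ℝ) • N.map Polynomial.C)).eval t := by
    intro t
    rw [← LinearMap.det_toMatrix b, ← Polynomial.coe_evalRingHom, RingHom.map_det]
    congr 1
    ext i j
    simp [N, Matrix.one_apply, LinearMap.toMatrix_apply, apply_ite, Finsupp.single_apply,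
      eq_comm, mul_comm t]
  simp_rw [h1]
  rw [LinearMap.trace_eq_matrix_trace ℝ b, ← Matrix.derivative_det_one_add_X_smul]
  exact Polynomial.hasDerivAt _ 0

section Haar

variable {E : Type*} [NormedAddCommGroup E] [NormedSpace ℝ E] [FiniteDimensional ℝ E]
  [MeasurableSpace E] [BorelSpace E] (μ : Measure E) [μ.IsAddHaarMeasure]

lemma lintegral_mul_truncPow_sub {h s : E → ℝ} (hh : Measurable h) (hs : Measurable s)
    (hs0 : ∀ g, 0 ≤ s g) {m c : ℝ} (hhm : ∀ a : ℝ, 0 < a → ∀ g, h (a • g) = a ^ m * h g)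
    (hsm : ∀ a : ℝ, ∀ g, s (a • g) = a ^ 2 * s g) (τ : ℝ) :
    ∫⁻ g, ENNReal.ofReal (h g * truncPow c (τ - s g)) ∂μ =
      ENNReal.ofReal (truncPow (c + (Module.finrank ℝ E + m) / 2) τ) *
        ∫⁻ g, ENNReal.ofReal (h g * truncPow c (1 - s g)) ∂μ := by
  by_cases hτ : 0 < τ
  swap
  · have (g : E) : truncPow c (τ - s g) = 0 := by
      have := hs0 g
      rw [truncPow, if_neg (by linarith)]
    have h0 : truncPow (c + (Module.finrank ℝ E + m) / 2) τ = 0 := if_neg hτ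
    simp only [this, h0, mul_zero, ENNReal.ofReal_zero, lintegral_zero, zero_mul]
  set d := Module.finrank ℝ E
  have hr : 0 < √τ := Real.sqrt_pos.2 hτ
  have hmeas : Measurable fun g => ENNReal.ofReal (h g * truncPow c (τ - s g)) := by
    have := measurable_truncPow c
    fun_prop
  have key := lintegral_map (μ := μ) hmeas (measurable_const_smul (√τ))
  rw [Measure.map_addHaar_smul μ hr.ne', lintegral_smul_measure] at key
  have h1 : ∀ g, ENNReal.ofReal (h (√τ • g) * truncPow c (τ - s (√τ • g))) =
      ENNReal.ofReal (√τ ^ m * τ ^ c) * ENNReal.ofReal (h g * truncPow c (1 - s g)) := by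
    intro g
    rw [← ENNReal.ofReal_mul (by positivity), hhm _ hr, hsm, Real.sq_sqrt hτ.le]
    have : truncPow c (τ - τ * s g) = τ ^ c * truncPow c (1 - s g) := by
      have e : τ - τ * s g = τ * (1 - s g) := by ring
      unfold truncPow
      rw [e]
      by_cases hg : 0 < 1 - s g
      · rw [if_pos (by positivity), if_pos hg, Real.mul_rpow hτ.le hg.le]
      · rw [if_neg (by nlinarith), if_neg hg, mul_zero]
    rw [this]
    ring_nf
  simp_rw [h1] at key
  rw [lintegral_const_mul' _ _ ENNReal.ofReal_ne_top, smul_eq_mul] at key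
  have h2 : ENNReal.ofReal |(√τ ^ d)⁻¹| ≠ 0 := by
    simp only [ne_eq, ENNReal.ofReal_eq_zero, not_le]
    positivity
  have h3 : ENNReal.ofReal (√τ ^ d) * ENNReal.ofReal |(√τ ^ d)⁻¹| = 1 := by
    rw [← ENNReal.ofReal_mul (by positivity), abs_of_pos (by positivity),
      mul_inv_cancel₀ (by positivity), ENNReal.ofReal_one]
  calc _ = ENNReal.ofReal (√τ ^ d) * (ENNReal.ofReal |(√τ ^ d)⁻¹| *
        ∫⁻ g, ENNReal.ofReal (h g * truncPow c (τ - s g)) ∂μ) := by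
          rw [← mul_assoc, h3, one_mul]
    _ = _ := by
      rw [key, ← mul_assoc, ← ENNReal.ofReal_mul (by positivity)]
      congr 2
      rw [truncPow, if_pos hτ, Real.sqrt_eq_rpow, ← Real.rpow_natCast, ← Real.rpow_mul hτ.le,
        ← Real.rpow_mul hτ.le, ← Real.rpow_add hτ, ← Real.rpow_add hτ]
      congr 1
      ring

lemma lintegral_mul_exp_neg_eq {h s : E → ℝ} (hh : Measurable h) (hs : Measurable s)
    (hh0 : ∀ g, 0 ≤ h g) (hs0 : ∀ g, 0 ≤ s g) {m c : ℝ} (hc : 0 ≤ c) (hm : 0 ≤ m)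
    (hhm : ∀ a : ℝ, 0 < a → ∀ g, h (a • g) = a ^ m * h g)
    (hsm : ∀ a : ℝ, ∀ g, s (a • g) = a ^ 2 * s g) :
    ENNReal.ofReal (Real.Gamma (c + 1)) * ∫⁻ g, ENNReal.ofReal (h g * Real.exp (-s g)) ∂μ =
      ENNReal.ofReal (Real.Gamma (c + (Module.finrank ℝ E + m) / 2 + 1)) *
        ∫⁻ g, ENNReal.ofReal (h g * truncPow c (1 - s g)) ∂μ := by
  have hmt := measurable_truncPow c
  have e1 : ∫⁻ τ : ℝ, ∫⁻ g, ENNReal.ofReal (Real.exp (-τ)) *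
      ENNReal.ofReal (h g * truncPow c (τ - s g)) ∂μ =
      ENNReal.ofReal (Real.Gamma (c + (Module.finrank ℝ E + m) / 2 + 1)) *
        ∫⁻ g, ENNReal.ofReal (h g * truncPow c (1 - s g)) ∂μ := by
    rw [← lintegral_exp_neg_mul_truncPow (by positivity), ← lintegral_mul_const]
    · refine lintegral_congr fun τ => ?_
      rw [lintegral_const_mul' _ _ ENNReal.ofReal_ne_top,
        lintegral_mul_truncPow_sub μ hh hs hs0 hhm hsm, ← mul_assoc,
        ← ENNReal.ofReal_mul (by positivity)]
    · have := measurable_truncPow (c + (Module.finrank ℝ E + m) / 2)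
      fun_prop
  rw [← e1, lintegral_lintegral_swap (by fun_prop), ← lintegral_const_mul']
  · refine lintegral_congr fun g => ?_
    rw [← lintegral_exp_neg_mul_truncPow hc, ← lintegral_add_right_eq_self
      (fun τ => ENNReal.ofReal (Real.exp (-τ)) * ENNReal.ofReal (h g * truncPow c (τ - s g))) (s g),
      ← lintegral_mul_const]
    · refine lintegral_congr fun τ => ?_
      have := hh0 g
      have := truncPow_nonneg c τ
      rw [← ENNReal.ofReal_mul (by positivity), ← ENNReal.ofReal_mul (by positivity),
        add_sub_cancel_right, neg_add, Real.exp_add]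
      ring_nf
    · fun_prop
  · exact ENNReal.ofReal_ne_top

/-- Infinitesimal change of variables `g ↦ g + t L g` in a Gaussian integral. -/
lemma integral_mul_rpow_mul_exp_neg {L : E →ₗ[ℝ] E} {s p q r : E → ℝ} {b : ℝ}
    (hq0 : ∀ g, 0 ≤ q g)
    (hsL : ∀ t : ℝ, ∀ g, s (g + t • L g) = s g + 2 * t * p g + t ^ 2 * r g)
    (hqL : ∀ t : ℝ, ∀ g, q (g + t • L g) = (1 + t) ^ 2 * q g)
    (iJ : Integrable (fun g => q g ^ b * Real.exp (-s g)) μ)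
    (iA : Integrable (fun g => p g * (q g ^ b * Real.exp (-s g))) μ)
    (iB : Integrable (fun g => r g * (q g ^ b * Real.exp (-s g))) μ) :
    2 * ∫ g, p g * (q g ^ b * Real.exp (-s g)) ∂μ =
      (LinearMap.trace ℝ E L + 2 * b) * ∫ g, q g ^ b * Real.exp (-s g) ∂μ := by
  set J := ∫ g, q g ^ b * Real.exp (-s g) ∂μ with hJ
  set A := ∫ g, p g * (q g ^ b * Real.exp (-s g)) ∂μ with hA
  set B := ∫ g, r g * (q g ^ b * Real.exp (-s g)) ∂μ with hB
  let φ : ℝ → ℝ := fun t => LinearMap.det (1 + t • L) * (1 + t) ^ (2 * b) *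
    (J - 2 * t * A - t ^ 2 * B)
  have hdet := LinearMap.hasDerivAt_det_one_add_smul L
  have hφ : HasDerivAt φ ((LinearMap.trace ℝ E L + 2 * b) * J - 2 * A) 0 := by
    have h1 : HasDerivAt (fun t : ℝ => (1 + t) ^ (2 * b)) (2 * b) 0 := by
      have := ((hasDerivAt_id (0 : ℝ)).const_add 1).rpow_const (p := 2 * b) (by simp)
      simpa using this
    have h2 : HasDerivAt (fun t : ℝ => J - 2 * t * A - t ^ 2 * B) (-(2 * A)) 0 := by
      have := ((((hasDerivAt_id (0 : ℝ)).const_mul 2).mul_const A).const_sub J).sub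
        (((hasDerivAt_id (0 : ℝ)).pow 2).mul_const B)
      refine (this.congr_deriv ?_)
      simp
    refine ((hdet.mul h1).mul h2).congr_deriv ?_
    simp
    ring
  have hmax : IsLocalMax φ 0 := by
    have c1 : ∀ᶠ t in nhds (0 : ℝ), 0 < LinearMap.det (1 + t • L) := by
      apply hdet.continuousAt.eventually_const_lt
      simp
    have c2 : ∀ᶠ t in nhds (0 : ℝ), 0 < 1 + t := by
      apply (continuousAt_const.add continuousAt_id).eventually_const_lt
      simp
    filter_upwards [c1, c2] with t ht1 ht2
    have e0 : φ 0 = J := by simp [φ]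
    rw [e0]
    have hmap := Measure.map_linearMap_addHaar_eq_smul_addHaar μ ht1.ne'
    have hemb : MeasurableEmbedding (1 + t • L : E →ₗ[ℝ] E) :=
      (LinearMap.equivOfDetNeZero _ ht1.ne').toContinuousLinearEquiv.toHomeomorph.measurableEmbedding
    have hi := hemb.integral_map (μ := μ) (fun g => q g ^ b * Real.exp (-s g))
    rw [hmap, integral_smul_measure, ENNReal.toReal_ofReal (abs_nonneg _), ← hJ,
      abs_of_pos (inv_pos.2 ht1), smul_eq_mul] at hi
    have hi2 : J = LinearMap.det (1 + t • L) * ∫ g, q ((1 + t • L : E →ₗ[ℝ] E) g) ^ b *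
        Real.exp (-s ((1 + t • L : E →ₗ[ℝ] E) g)) ∂μ := by
      rw [← hi, mul_inv_cancel_left₀ ht1.ne']
    have hpt : ∀ g, (1 + t) ^ (2 * b) * (q g ^ b * Real.exp (-s g) -
        2 * t * (p g * (q g ^ b * Real.exp (-s g))) -
        t ^ 2 * (r g * (q g ^ b * Real.exp (-s g)))) ≤
        q ((1 + t • L : E →ₗ[ℝ] E) g) ^ b * Real.exp (-s ((1 + t • L : E →ₗ[ℝ] E) g)) := by
      intro g
      have a1 : (1 + t • L : E →ₗ[ℝ] E) g = g + t • L g := by simp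
      rw [a1, hsL, hqL, Real.mul_rpow (by positivity) (hq0 g), Real.rpow_mul ht2.le,
        Real.rpow_two]
      have a2 : Real.exp (-(s g + 2 * t * p g + t ^ 2 * r g)) =
        Real.exp (-s g) * Real.exp (-(2 * t * p g + t ^ 2 * r g)) := by
        rw [← Real.exp_add]; ring_nf
      have a3 := Real.add_one_le_exp (-(2 * t * p g + t ^ 2 * r g))
      have a4 : 0 ≤ ((1 + t) ^ 2) ^ b * q g ^ b * Real.exp (-s g) := by
        have := hq0 g
        positivity
      rw [a2]
      nlinarith [mul_le_mul_of_nonneg_left a3 a4]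
    rw [hi2]
    simp only [φ]
    rw [mul_assoc]
    refine mul_le_mul_of_nonneg_left ?_ ht1.le
    have hL : (1 + t) ^ (2 * b) * (J - 2 * t * A - t ^ 2 * B) =
        ∫ g, (1 + t) ^ (2 * b) * (q g ^ b * Real.exp (-s g) -
        2 * t * (p g * (q g ^ b * Real.exp (-s g))) -
        t ^ 2 * (r g * (q g ^ b * Real.exp (-s g)))) ∂μ := by
      have iJA : Integrable (fun g => q g ^ b * Real.exp (-s g) -
          2 * t * (p g * (q g ^ b * Real.exp (-s g)))) μ := iJ.sub (iA.const_mul _)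
      rw [integral_const_mul, integral_sub iJA (iB.const_mul _),
        integral_sub iJ (iA.const_mul _), integral_const_mul, integral_const_mul]
    rw [hL]
    refine integral_mono ?_ ?_ hpt
    · exact ((iJ.sub (iA.const_mul _)).sub (iB.const_mul _)).const_mul _
    · have := hemb.integrable_map_iff (μ := μ) (g := fun g => q g ^ b * Real.exp (-s g))
      rw [hmap] at this
      exact this.1 (iJ.smul_measure ENNReal.ofReal_ne_top)
  have := hmax.hasDerivAt_eq_zero hφ
  linarith

lemma lintegral_mul_truncPow_lt_top [Nontrivial E] {h s : E → ℝ} (hh : Continuous h)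
    (hh0 : ∀ g, 0 ≤ h g) {κ : ℝ}
    (hκ : 0 < κ) (hs : ∀ g, κ * ‖g‖ ^ 2 ≤ s g) {c : ℝ} (hc : 0 ≤ c) :
    ∫⁻ g, ENNReal.ofReal (h g * truncPow c (1 - s g)) ∂μ < ⊤ := by
  set K := Metric.closedBall (0 : E) √(1 / κ)
  have hK : IsCompact K := isCompact_closedBall _ _
  refine lt_of_le_of_lt (lintegral_mono (g := K.indicator fun g => ENNReal.ofReal (h g)) ?_) ?_
  · intro g
    by_cases hg : 0 < 1 - s g
    · have hgK : g ∈ K := by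
        rw [mem_closedBall_zero_iff]
        apply Real.le_sqrt_of_sq_le
        rw [le_div_iff₀ hκ]
        linarith [hs g]
      rw [Set.indicator_of_mem hgK]
      apply ENNReal.ofReal_le_ofReal
      refine mul_le_of_le_one_right (hh0 g) ?_
      rw [truncPow, if_pos hg]
      have : 0 ≤ s g := le_trans (by positivity) (hs g)
      exact Real.rpow_le_one hg.le (by linarith) hc
    · simp only [truncPow, if_neg hg, mul_zero, ENNReal.ofReal_zero, zero_le]
  · rw [lintegral_indicator hK.measurableSet]
    exact (hh.continuousOn.integrableOn_compact hK).lintegral_lt_top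

lemma integrable_mul_exp_neg [Nontrivial E] {h s : E → ℝ} (hh : Continuous h) (hsc : Continuous s)
    (hh0 : ∀ g, 0 ≤ h g) {m : ℝ} (hm : 0 ≤ m)
    (hhm : ∀ a : ℝ, 0 < a → ∀ g, h (a • g) = a ^ m * h g)
    (hsm : ∀ a : ℝ, ∀ g, s (a • g) = a ^ 2 * s g)
    {κ : ℝ} (hκ : 0 < κ) (hs : ∀ g, κ * ‖g‖ ^ 2 ≤ s g) :
    Integrable (fun g => h g * Real.exp (-s g)) μ := by
  have h0 := lintegral_mul_exp_neg_eq μ hh.measurable hsc.measurable hh0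
    (fun g => le_trans (by positivity) (hs g)) le_rfl hm hhm hsm
  rw [zero_add, Real.Gamma_one, ENNReal.ofReal_one, one_mul] at h0
  refine ⟨(by fun_prop), ?_⟩
  rw [hasFiniteIntegral_iff_ofReal (.of_forall fun g => mul_nonneg (hh0 g) (Real.exp_nonneg _)), h0]
  exact ENNReal.mul_lt_top ENNReal.ofReal_lt_top
    (lintegral_mul_truncPow_lt_top μ hh hh0 hκ hs le_rfl)

theorem lintegral_mul_rpow_mul_truncPow [Nontrivial E] {L : E →ₗ[ℝ] E} {s p q r : E → ℝ}
    {a b c e κ : ℝ} (ha : 0 ≤ a) (hb : 0 ≤ b) (hc : 0 ≤ c) (he : 0 ≤ e)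
    (hsc : Continuous s) (hpc : Continuous p) (hqc : Continuous q) (hrc : Continuous r)
    (hp0 : ∀ g, 0 ≤ p g) (hq0 : ∀ g, 0 ≤ q g) (hr0 : ∀ g, 0 ≤ r g)
    (hκ : 0 < κ) (hs : ∀ g, κ * ‖g‖ ^ 2 ≤ s g)
    (hsm : ∀ u : ℝ, ∀ g, s (u • g) = u ^ 2 * s g)
    (hpm : ∀ u : ℝ, ∀ g, p (u • g) = u ^ 2 * p g)
    (hqm : ∀ u : ℝ, ∀ g, q (u • g) = u ^ 2 * q g)
    (hrm : ∀ u : ℝ, ∀ g, r (u • g) = u ^ 2 * r g)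
    (hsL : ∀ t : ℝ, ∀ g, s (g + t • L g) = s g + 2 * t * p g + t ^ 2 * r g)
    (hqL : ∀ t : ℝ, ∀ g, q (g + t • L g) = (1 + t) ^ 2 * q g)
    (htr : LinearMap.trace ℝ E L = 2 * a - 2 * e) :
    ENNReal.ofReal (c + Module.finrank ℝ E / 2 + b + 1) *
        ∫⁻ g, ENNReal.ofReal (p g * (q g ^ b * truncPow c (1 - s g))) ∂μ +
      ENNReal.ofReal e * ∫⁻ g, ENNReal.ofReal (q g ^ b * truncPow c (1 - s g)) ∂μ =
      ENNReal.ofReal (a + b) * ∫⁻ g, ENNReal.ofReal (q g ^ b * truncPow c (1 - s g)) ∂μ := by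
  have hs0 : ∀ g, 0 ≤ s g := fun g => le_trans (by positivity) (hs g)
  have hqbc : Continuous fun g => q g ^ b := hqc.rpow_const fun _ => Or.inr hb
  have hqb0 : ∀ g, 0 ≤ q g ^ b := fun g => Real.rpow_nonneg (hq0 g) b
  have hqbm : ∀ u : ℝ, 0 < u → ∀ g, q (u • g) ^ b = u ^ (2 * b) * q g ^ b := by
    intro u hu g
    rw [hqm, Real.mul_rpow (by positivity) (hq0 g), Real.rpow_mul hu.le, Real.rpow_two]
  have hmul : ∀ f : E → ℝ, (∀ u : ℝ, ∀ g, f (u • g) = u ^ 2 * f g) →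
      ∀ u : ℝ, 0 < u → ∀ g, f (u • g) * q (u • g) ^ b = u ^ (2 * b + 2) * (f g * q g ^ b) := by
    intro f hf u hu g
    rw [hqbm u hu, hf, Real.rpow_add hu, Real.rpow_two]
    ring
  have iJ := integrable_mul_exp_neg μ hqbc hsc hqb0 (by positivity) hqbm hsm hκ hs
  have iA := integrable_mul_exp_neg μ (hpc.mul hqbc) hsc (fun g => mul_nonneg (hp0 g) (hqb0 g))
    (by positivity) (hmul p hpm) hsm hκ hs
  have iB := integrable_mul_exp_neg μ (hrc.mul hqbc) hsc (fun g => mul_nonneg (hr0 g) (hqb0 g))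
    (by positivity) (hmul r hrm) hsm hκ hs
  have key := integral_mul_rpow_mul_exp_neg μ hq0 hsL hqL iJ
    (by simpa only [Pi.mul_apply, mul_assoc] using iA)
    (by simpa only [Pi.mul_apply, mul_assoc] using iB)
  have g1 := lintegral_mul_exp_neg_eq μ hqbc.measurable hsc.measurable hqb0 hs0 hc
    (by positivity) hqbm hsm
  have g2 := lintegral_mul_exp_neg_eq μ (hpc.mul hqbc).measurable hsc.measurable
    (fun g => mul_nonneg (hp0 g) (hqb0 g)) hs0 hc (by positivity) (hmul p hpm) hsm
  have t1 := lintegral_mul_truncPow_lt_top μ hqbc hqb0 hκ hs hc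
  have t2 := lintegral_mul_truncPow_lt_top μ (hpc.mul hqbc)
    (fun g => mul_nonneg (hp0 g) (hqb0 g)) hκ hs hc
  simp only [Pi.mul_apply, mul_assoc] at g2 t2
  rw [← ofReal_integral_eq_lintegral_ofReal iJ
    (.of_forall fun g => mul_nonneg (hqb0 g) (Real.exp_nonneg _))] at g1
  rw [← ofReal_integral_eq_lintegral_ofReal (by simpa only [Pi.mul_apply, mul_assoc] using iA)
    (.of_forall fun g => mul_nonneg (hp0 g) (mul_nonneg (hqb0 g) (Real.exp_nonneg _)))] at g2
  set J := ∫ g, q g ^ b * Real.exp (-s g) ∂μ with hJ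
  set A := ∫ g, p g * (q g ^ b * Real.exp (-s g)) ∂μ with hA
  have hJ0 : 0 ≤ J := integral_nonneg fun g => mul_nonneg (hqb0 g) (Real.exp_nonneg _)
  have hA0 : 0 ≤ A :=
    integral_nonneg fun g => mul_nonneg (hp0 g) (mul_nonneg (hqb0 g) (Real.exp_nonneg _))
  lift (∫⁻ g, ENNReal.ofReal (q g ^ b * truncPow c (1 - s g)) ∂μ) to NNReal using t1.ne with u
  lift (∫⁻ g, ENNReal.ofReal (p g * (q g ^ b * truncPow c (1 - s g))) ∂μ) to NNReal
    using t2.ne with v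
  set x := c + (Module.finrank ℝ E : ℝ) / 2 + b + 1 with hx
  have hx0 : 0 < x := by positivity
  have x1 : c + ((Module.finrank ℝ E : ℝ) + 2 * b) / 2 + 1 = x := by rw [hx]; ring
  have x2 : c + ((Module.finrank ℝ E : ℝ) + (2 * b + 2)) / 2 + 1 = x + 1 := by rw [hx]; ring
  rw [x1] at g1
  rw [x2, Real.Gamma_add_one hx0.ne'] at g2
  have hG := Real.Gamma_pos_of_pos hx0
  have hG1 : 0 < Real.Gamma (c + 1) := Real.Gamma_pos_of_pos (by linarith)
  have r1 : Real.Gamma (c + 1) * J = Real.Gamma x * u := by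
    have := congrArg ENNReal.toReal g1
    simpa [ENNReal.toReal_mul, hG1.le, hJ0, hG.le] using this
  have r2 : Real.Gamma (c + 1) * A = x * Real.Gamma x * v := by
    have := congrArg ENNReal.toReal g2
    simpa [ENNReal.toReal_mul, hG1.le, hA0, hG.le, hx0.le] using this
  have r3 : x * v + e * u = (a + b) * u := by
    rw [htr] at key
    have k2 : A = (a - e + b) * J := by linarith
    rw [k2] at r2
    have : Real.Gamma x * (x * v + e * u) = Real.Gamma x * ((a + b) * u) := by
      linear_combination (-r2) + (a - e + b) * r1
    exact mul_left_cancel₀ hG.ne' this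
  rw [← ENNReal.ofReal_coe_nnreal (p := u), ← ENNReal.ofReal_coe_nnreal (p := v),
    ← ENNReal.ofReal_mul hx0.le, ← ENNReal.ofReal_mul he, ← ENNReal.ofReal_mul (by positivity),
    ← ENNReal.ofReal_add (by positivity) (by positivity), r3]

end Haar

/-- The complex matrix of a rectangular quaternion matrix, in `2 × 2` blocks. -/
noncomputable def quatBlock {α β : Type*} (v : α → β → ℂ × ℂ) :
    Matrix (α × Fin 2) (β × Fin 2) ℂ :=
  Matrix.of fun a b =>
    if a.2 = 0 then
      (if b.2 = 0 then (v a.1 b.1).1 else (v a.1 b.1).2)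
    else
      (if b.2 = 0 then -(starRingEnd ℂ) ((v a.1 b.1).2)
        else (starRingEnd ℂ) ((v a.1 b.1).1))

lemma quatMatrix_eq_quatBlock (n : ℕ) (x : Fin n → Fin n → ℂ × ℂ) :
    quatMatrix n x = quatBlock x := rfl

/-- A complex matrix in `2 × 2` blocks is the matrix of a quaternion matrix. -/
def IsQuat {α β : Type*} (M : Matrix (α × Fin 2) (β × Fin 2) ℂ) : Prop :=
  ∀ a b, M (a, 1) (b, 1) = star (M (a, 0) (b, 0)) ∧ M (a, 1) (b, 0) = -star (M (a, 0) (b, 1))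

namespace IsQuat

variable {α β γ : Type*}

lemma quatBlock (v : α → β → ℂ × ℂ) : IsQuat (quatBlock v) := fun a b => by
  simp [_root_.quatBlock]

lemma mul [Fintype β] {M : Matrix (α × Fin 2) (β × Fin 2) ℂ} {N : Matrix (β × Fin 2) (γ × Fin 2) ℂ}
    (hM : IsQuat M) (hN : IsQuat N) : IsQuat (M * N) := fun a c => by
  simp only [Matrix.mul_apply, Fintype.sum_prod_type, Fin.sum_univ_two, star_sum, star_add,
    star_mul', ← Finset.sum_neg_distrib]
  constructor <;> refine Finset.sum_congr rfl fun b _ => ?_ <;>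
    simp [(hM a b).1, (hM a b).2, (hN b c).1, (hN b c).2]; ring

lemma conjTranspose {M : Matrix (α × Fin 2) (β × Fin 2) ℂ} (hM : IsQuat M) : IsQuat Mᴴ :=
  fun b a => by simp [Matrix.conjTranspose_apply, (hM a b).1, (hM a b).2]

lemma one [DecidableEq α] : IsQuat (1 : Matrix (α × Fin 2) (α × Fin 2) ℂ) := fun a b => by
  simp [Matrix.one_apply, apply_ite]

lemma sub {M N : Matrix (α × Fin 2) (β × Fin 2) ℂ} (hM : IsQuat M) (hN : IsQuat N) :
    IsQuat (M - N) := fun a b => by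
  simp [(hM a b).1, (hM a b).2, (hN a b).1, (hN a b).2]; ring

lemma submatrix {α' β' : Type*} {M : Matrix (α × Fin 2) (β × Fin 2) ℂ} (hM : IsQuat M)
    (f : α' → α) (g : β' → β) : IsQuat (M.submatrix (Prod.map f id) (Prod.map g id)) :=
  fun a b => hM (f a) (g b)

/-- Conjugation by the quaternionic structure; its fixed points are the quaternion matrices. -/
noncomputable def conj (M : Matrix (α × Fin 2) (β × Fin 2) ℂ) :
    Matrix (α × Fin 2) (β × Fin 2) ℂ :=
  Matrix.of fun a b => (-1) ^ (a.2 : ℕ) * (-1) ^ (b.2 : ℕ) * star (M (a.1, a.2 + 1) (b.1, b.2 + 1))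

lemma iff_conj_eq {M : Matrix (α × Fin 2) (β × Fin 2) ℂ} : IsQuat M ↔ conj M = M := by
  constructor
  · intro h
    ext ⟨a, e⟩ ⟨b, f⟩
    fin_cases e <;> fin_cases f <;> simp [conj, (h a b).1, (h a b).2]
  · intro h a b
    constructor
    · conv_lhs => rw [← h]
      simp [conj]
    · conv_lhs => rw [← h]
      simp [conj]

lemma conj_mul [Fintype β] (M : Matrix (α × Fin 2) (β × Fin 2) ℂ)
    (N : Matrix (β × Fin 2) (γ × Fin 2) ℂ) : conj (M * N) = conj M * conj N := by
  ext ⟨a, e⟩ ⟨b, f⟩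
  simp only [conj, Matrix.mul_apply, Matrix.of_apply, Fintype.sum_prod_type, Fin.sum_univ_two,
    star_sum, Finset.mul_sum]
  refine Finset.sum_congr rfl fun c _ => ?_
  simp
  ring

lemma inv [Fintype α] [DecidableEq α] {M : Matrix (α × Fin 2) (α × Fin 2) ℂ} (hM : IsQuat M)
    (hdet : M.det ≠ 0) : IsQuat M⁻¹ := by
  rw [iff_conj_eq]
  have h1 : conj M⁻¹ * M = 1 := by
    have := conj_mul M⁻¹ M
    rw [Matrix.nonsing_inv_mul _ hdet.isUnit, iff_conj_eq.1 hM, iff_conj_eq.1 one] at this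
    exact this.symm
  exact (Matrix.inv_eq_left_inv h1).symm

lemma eq_smul_one {Y : Matrix (Unit × Fin 2) (Unit × Fin 2) ℂ} (hY : IsQuat Y)
    (hH : Y.IsHermitian) : Y = ((Y ((), 0) ((), 0)).re : ℂ) • 1 := by
  have h00 := congrFun (congrFun hH ((), 0)) ((), 0)
  have h01 := congrFun (congrFun hH ((), 0)) ((), 1)
  have h1 := hY () ()
  simp only [Matrix.conjTranspose_apply] at h00 h01
  have r00 : ((Y ((), 0) ((), 0)).re : ℂ) = Y ((), 0) ((), 0) := Complex.conj_eq_iff_re.1 h00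
  have z01 : Y ((), 0) ((), 1) = 0 := by
    rw [h1.2, star_neg, star_star] at h01
    linear_combination (-1 / 2 : ℂ) * h01
  ext ⟨⟨⟩, e⟩ ⟨⟨⟩, f⟩
  fin_cases e <;> fin_cases f <;> simp [r00, z01, h1.1, h1.2, h00]

lemma det_unit {D : Matrix (Unit × Fin 2) (Unit × Fin 2) ℂ} (hD : IsQuat D) :
    D.det = ((Complex.normSq (D ((), 0) ((), 0)) + Complex.normSq (D ((), 0) ((), 1)) : ℝ) : ℂ) := by
  rw [← Matrix.det_submatrix_equiv_self (Equiv.punitProd (Fin 2)).symm, Matrix.det_fin_two]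
  simp [(hD () ()).1, (hD () ()).2, Complex.mul_conj]

lemma det_nonneg {α : Type} [Fintype α] [DecidableEq α] {M : Matrix (α × Fin 2) (α × Fin 2) ℂ}
    (hM : IsQuat M) : 0 ≤ M.det := by
  suffices ∀ (_ : DecidableEq α) (M : Matrix (α × Fin 2) (α × Fin 2) ℂ), IsQuat M →
      0 ≤ M.det from this _ M hM
  clear! M
  refine Fintype.induction_empty_option (P := fun α _ => ∀ (_ : DecidableEq α)
    (M : Matrix (α × Fin 2) (α × Fin 2) ℂ), IsQuat M → 0 ≤ M.det) ?_ ?_ ?_ α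
  · intro α β _ e ih _ M hM
    classical
    let _ := Fintype.ofEquiv β e.symm
    have := ih inferInstance _ (hM.submatrix e e)
    rw [← Matrix.det_submatrix_equiv_self (Equiv.prodCongr e (Equiv.refl (Fin 2)))]
    convert! this
  · intro _ M _
    simp
  · intro α _ ih _
    classical
    suffices key : ∀ (M : Matrix (Option α × Fin 2) (Option α × Fin 2) ℂ), IsQuat M →
        (Matrix.of fun (a b : Unit × Fin 2) => M (none, a.2) (none, b.2)).det ≠ 0 → 0 ≤ M.det by
      intro M hM
      by_cases h0 : (Matrix.of fun (a b : Unit × Fin 2) => M (none, a.2) (none, b.2)).det = 0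
      swap
      · exact key M hM h0
      have hq : ∀ t : ℝ, IsQuat (M + (t : ℂ) • 1) := fun t a b => by
        rcases eq_or_ne a b with rfl | h
        · simp [(hM a a).1, (hM a a).2]
        · simp [(hM a b).1, (hM a b).2, h]
      have hlim : Filter.Tendsto (fun t : ℝ => (M + (t : ℂ) • 1).det) (nhdsWithin 0 {0}ᶜ)
          (nhds M.det) := by
        have : Continuous fun t : ℝ => (M + (t : ℂ) • 1).det := by fun_prop
        have h2 := this.tendsto 0
        simp only [Complex.ofReal_zero, zero_smul, add_zero] at h2
        exact h2.mono_left nhdsWithin_le_nhds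
      refine ge_of_tendsto hlim ?_
      filter_upwards [self_mem_nhdsWithin] with t ht
      refine key _ (hq t) ?_
      have hD : IsQuat (Matrix.of fun (a b : Unit × Fin 2) => M (none, a.2) (none, b.2)) :=
        fun a b => hM none none
      have hDt : IsQuat (Matrix.of fun (a b : Unit × Fin 2) =>
        (M + (t : ℂ) • 1) (none, a.2) (none, b.2)) := fun a b => hq t none none
      rw [det_unit hD, Complex.ofReal_eq_zero] at h0
      rw [det_unit hDt]
      simp only [Matrix.of_apply] at h0 ⊢
      have n1 := Complex.normSq_nonneg (M (none, 0) (none, 0))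
      have n2 := Complex.normSq_nonneg (M (none, 0) (none, 1))
      have z1 : M (none, 0) (none, 0) = 0 := Complex.normSq_eq_zero.1 (by linarith)
      have z2 : M (none, 0) (none, 1) = 0 := Complex.normSq_eq_zero.1 (by linarith)
      simpa [z1, z2] using ht
    intro M hM h0
    let e : (α × Fin 2) ⊕ (Unit × Fin 2) ≃ Option α × Fin 2 :=
      (Equiv.sumProdDistrib α Unit (Fin 2)).symm.trans
        (Equiv.prodCongr (Equiv.optionEquivSumPUnit α).symm (Equiv.refl (Fin 2)))
    rw [← Matrix.det_submatrix_equiv_self e, ← Matrix.fromBlocks_toBlocks (M.submatrix e e)]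
    have hD : IsQuat (M.submatrix e e).toBlocks₂₂ := fun a b => hM none none
    have hd0 : (M.submatrix e e).toBlocks₂₂.det ≠ 0 := h0
    have := Matrix.invertibleOfIsUnitDet _ hd0.isUnit
    rw [Matrix.det_fromBlocks₂₂]
    refine mul_nonneg ?_ ?_
    · rw [det_unit hD, Complex.zero_le_real]
      exact add_nonneg (Complex.normSq_nonneg _) (Complex.normSq_nonneg _)
    · refine ih inferInstance _ (IsQuat.sub (fun a b => hM (some a) (some b)) (IsQuat.mul (IsQuat.mul
        (β := Unit) (fun a b => hM (some a) none) ?_) (fun a b => hM none (some b))))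
      rw [Matrix.invOf_eq_nonsing_inv]
      exact hD.inv hd0

end IsQuat

section SchurComplement

variable {m u : Type*} [Fintype m] [DecidableEq m] [Fintype u] [DecidableEq u]

lemma Matrix.PosDef.posSemidef_sub_mul_conjTranspose_iff {X : Matrix m m ℂ} (hX : X.PosDef)
    (a : Matrix m u ℂ) : (X - a * aᴴ).PosSemidef ↔ (1 - aᴴ * X⁻¹ * a).PosSemidef := by
  have := hX.isUnit.invertible
  have : Invertible (1 : Matrix u u ℂ) := invertibleOne
  rw [← PosDef.fromBlocks₁₁ a 1 hX, PosDef.fromBlocks₂₂ X a PosDef.one]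
  simp

lemma Matrix.det_sub_mul_conjTranspose {X : Matrix m m ℂ} (hX : X.det ≠ 0)
    (a : Matrix m u ℂ) : (X - a * aᴴ).det = X.det * (1 - aᴴ * X⁻¹ * a).det := by
  have := invertibleOfIsUnitDet X hX.isUnit
  rw [← invOf_eq_nonsing_inv, ← det_fromBlocks₁₁, det_fromBlocks_one₂₂]

end SchurComplement

section QuatGram

variable {α β : Type*} [Fintype α] [DecidableEq α] [Fintype β]

/-- A quaternion row vector as a complex `2`-row matrix. -/
noncomputable abbrev quatRow (y : β → ℂ × ℂ) : Matrix (Unit × Fin 2) (β × Fin 2) ℂ :=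
  quatBlock fun _ => y

/-- A quaternion column vector as a complex `2`-column matrix. -/
noncomputable abbrev quatCol (y : α → ℂ × ℂ) : Matrix (α × Fin 2) (Unit × Fin 2) ℂ :=
  quatBlock fun i _ => y i

/-- The real quadratic form on quaternion row vectors attached to a complex matrix. -/
noncomputable def quatForm (H : Matrix (β × Fin 2) (β × Fin 2) ℂ) (y : β → ℂ × ℂ) : ℝ :=
  ((quatRow y * H * (quatRow y)ᴴ) ((), 0) ((), 0)).re

lemma quatRow_mul_mul_conjTranspose {H : Matrix (β × Fin 2) (β × Fin 2) ℂ} (hq : IsQuat H)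
    (hH : H.IsHermitian) (y : β → ℂ × ℂ) :
    quatRow y * H * (quatRow y)ᴴ = (quatForm H y : ℂ) • 1 := by
  refine IsQuat.eq_smul_one ?_ ?_
  · exact ((IsQuat.quatBlock _).mul hq).mul (IsQuat.quatBlock _).conjTranspose
  · exact isHermitian_mul_mul_conjTranspose _ hH

lemma det_smul_one_unit (c : ℂ) :
    (c • (1 : Matrix (Unit × Fin 2) (Unit × Fin 2) ℂ)).det = c ^ 2 := by
  simp

/-- The nonnegative square root of the Gram determinant of the rows of a quaternion matrix, that is,
the square of their quaternionic volume. -/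
noncomputable def quatVol (v : α → β → ℂ × ℂ) : ℝ :=
  √((quatBlock v * (quatBlock v)ᴴ).det.re)

lemma quatVol_nonneg (v : α → β → ℂ × ℂ) : 0 ≤ quatVol v := Real.sqrt_nonneg _

lemma det_quatBlock_mul_conjTranspose (v : α → β → ℂ × ℂ) :
    (quatBlock v * (quatBlock v)ᴴ).det = (quatVol v : ℂ) ^ 2 := by
  have h := (posSemidef_self_mul_conjTranspose (quatBlock v)).det_nonneg
  obtain ⟨h1, h2⟩ := Complex.le_def.1 h
  rw [← Complex.ofReal_pow, quatVol, Real.sq_sqrt (by simpa using h1)]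
  apply Complex.ext <;> simp [← h2]

lemma quatVol_eq_of_det_eq {v : α → β → ℂ × ℂ} {r : ℝ} (hr : 0 ≤ r)
    (h : (quatBlock v * (quatBlock v)ᴴ).det = (r : ℂ) ^ 2) : quatVol v = r := by
  rw [quatVol, h, ← Complex.ofReal_pow, Complex.ofReal_re, Real.sqrt_sq hr]

lemma quatVol_ne_zero_iff {v : α → β → ℂ × ℂ} :
    quatVol v ≠ 0 ↔ (quatBlock v * (quatBlock v)ᴴ).PosDef := by
  rw [(posSemidef_self_mul_conjTranspose (quatBlock v)).posDef_iff_det_ne_zero,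
    det_quatBlock_mul_conjTranspose]
  simp

lemma quatVol_submatrix_equiv {α' β' : Type*} [Fintype α'] [DecidableEq α'] [Fintype β']
    (e : α' ≃ α) (f : β' ≃ β) (v : α → β → ℂ × ℂ) :
    quatVol (fun i k => v (e i) (f k)) = quatVol v := by
  refine quatVol_eq_of_det_eq (quatVol_nonneg v) ?_
  rw [← det_quatBlock_mul_conjTranspose]
  let e' := Equiv.prodCongr e (Equiv.refl (Fin 2))
  let f' := Equiv.prodCongr f (Equiv.refl (Fin 2))
  have h : quatBlock (fun i k => v (e i) (f k)) = (quatBlock v).submatrix e' f' := rfl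
  rw [h, conjTranspose_submatrix, submatrix_mul_equiv, det_submatrix_equiv_self]

lemma quatVol_square {α : Type} [Fintype α] [DecidableEq α] (v : α → α → ℂ × ℂ) :
    (quatVol v : ℂ) = (quatBlock v).det := by
  have h := (IsQuat.quatBlock v).det_nonneg
  obtain ⟨h1, h2⟩ := Complex.le_def.1 h
  have h3 : ((quatBlock v).det.re : ℂ) = (quatBlock v).det := by
    apply Complex.ext <;> simp [← h2]
  rw [← h3, quatVol_eq_of_det_eq (by simpa using h1)]
  rw [det_mul, det_conjTranspose, h3, ← h3, Complex.star_def, Complex.conj_ofReal, sq]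

/-- The orthogonal projection onto the complement of the rows of a matrix of full row rank. -/
noncomputable def rowCompl {m k : Type*} [Fintype m] [DecidableEq m] [Fintype k] [DecidableEq k]
    (A : Matrix m k ℂ) : Matrix k k ℂ :=
  1 - Aᴴ * (A * Aᴴ)⁻¹ * A

section RowCompl

variable {m k : Type*} [Fintype m] [DecidableEq m] [Fintype k] [DecidableEq k] {A : Matrix m k ℂ}

lemma rowCompl_isHermitian (A : Matrix m k ℂ) : (rowCompl A).IsHermitian :=
  isHermitian_one.sub (isHermitian_conjTranspose_mul_mul _ (isHermitian_mul_conjTranspose_self A).inv)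

lemma mul_rowCompl (hA : (A * Aᴴ).det ≠ 0) : A * rowCompl A = 0 := by
  rw [rowCompl, Matrix.mul_sub, ← Matrix.mul_assoc, ← Matrix.mul_assoc,
    mul_nonsing_inv _ hA.isUnit, Matrix.mul_one, Matrix.one_mul, sub_self]

lemma rowCompl_mul_of_mul_eq_zero {l : Type*} {B : Matrix k l ℂ} (hB : A * B = 0) :
    rowCompl A * B = B := by
  rw [rowCompl, Matrix.sub_mul, Matrix.mul_assoc, hB]
  simp

lemma rowCompl_mul_self (hA : (A * Aᴴ).det ≠ 0) : rowCompl A * rowCompl A = rowCompl A :=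
  rowCompl_mul_of_mul_eq_zero (mul_rowCompl hA)

lemma rowCompl_posSemidef (hA : (A * Aᴴ).det ≠ 0) : (rowCompl A).PosSemidef := by
  have := posSemidef_self_mul_conjTranspose (rowCompl A)
  rwa [(rowCompl_isHermitian A).eq, rowCompl_mul_self hA] at this

lemma trace_rowCompl (hA : (A * Aᴴ).det ≠ 0) :
    (rowCompl A).trace = Fintype.card k - Fintype.card m := by
  rw [rowCompl, trace_sub, Matrix.mul_assoc, trace_mul_comm, Matrix.mul_assoc,
    nonsing_inv_mul _ hA.isUnit, trace_one, trace_one]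

end RowCompl

lemma isQuat_rowCompl [DecidableEq β] {v : α → β → ℂ × ℂ} (h : quatVol v ≠ 0) :
    IsQuat (rowCompl (quatBlock v)) := by
  have hv := IsQuat.quatBlock v
  refine IsQuat.one.sub ((hv.conjTranspose.mul (IsQuat.inv (hv.mul hv.conjTranspose) ?_)).mul hv)
  exact (quatVol_ne_zero_iff.1 h).det_pos.ne'

lemma quatBlock_elim {ι κ : Type*} (v : ι → κ → ℂ × ℂ) (y : κ → ℂ × ℂ) :
    (quatBlock (Sum.elim v fun _ : Unit => y)).submatrix
      (Equiv.sumProdDistrib ι Unit (Fin 2)).symm id = fromRows (quatBlock v) (quatRow y) := by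
  ext (i | i) j <;> rfl

lemma det_gram_elim {ι κ : Type*} [Fintype κ] (v : ι → κ → ℂ × ℂ) (y : κ → ℂ × ℂ) :
    (quatBlock (Sum.elim v fun _ : Unit => y) *
      (quatBlock (Sum.elim v fun _ : Unit => y))ᴴ).submatrix
        (Equiv.sumProdDistrib ι Unit (Fin 2)).symm (Equiv.sumProdDistrib ι Unit (Fin 2)).symm =
    fromBlocks (quatBlock v * (quatBlock v)ᴴ) (quatBlock v * (quatRow y)ᴴ)
      (quatRow y * (quatBlock v)ᴴ) (quatRow y * (quatRow y)ᴴ) := by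
  rw [← submatrix_mul_equiv _ _ _ (Equiv.refl _), ← conjTranspose_submatrix]
  erw [quatBlock_elim]
  rw [conjTranspose_fromRows_eq_fromCols_conjTranspose, fromRows_mul_fromCols]

lemma quatVol_elim [DecidableEq β] {v : α → β → ℂ × ℂ} (hv : quatVol v ≠ 0) (y : β → ℂ × ℂ) :
    quatVol (Sum.elim v fun _ : Unit => y) =
      quatVol v * quatForm (rowCompl (quatBlock v)) y := by
  have hd := (quatVol_ne_zero_iff.1 hv).det_pos.ne'
  have hp : 0 ≤ quatForm (rowCompl (quatBlock v)) y := by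
    have := ((rowCompl_posSemidef hd).mul_mul_conjTranspose_same (quatRow y)).diag_nonneg (i := ((), 0))
    exact (Complex.le_def.1 this).1
  refine quatVol_eq_of_det_eq (mul_nonneg (quatVol_nonneg v) hp) ?_
  rw [← det_submatrix_equiv_self (Equiv.sumProdDistrib α Unit (Fin 2)).symm, det_gram_elim]
  have := invertibleOfIsUnitDet _ hd.isUnit
  rw [det_fromBlocks₁₁, invOf_eq_nonsing_inv]
  have h : quatRow y * (quatRow y)ᴴ - quatRow y * (quatBlock v)ᴴ * (quatBlock v * (quatBlock v)ᴴ)⁻¹ *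
      (quatBlock v * (quatRow y)ᴴ) = quatRow y * rowCompl (quatBlock v) * (quatRow y)ᴴ := by
    simp only [rowCompl, Matrix.mul_sub, Matrix.sub_mul, Matrix.mul_one, Matrix.mul_assoc]
  rw [h, quatRow_mul_mul_conjTranspose (isQuat_rowCompl hv) (rowCompl_isHermitian _),
    det_smul_one_unit, det_quatBlock_mul_conjTranspose]
  push_cast
  ring

lemma quatVol_elim_eq_zero {v : α → β → ℂ × ℂ} (hv : quatVol v = 0) (y : β → ℂ × ℂ) :
    quatVol (Sum.elim v fun _ : Unit => y) = 0 := by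
  by_contra h
  refine quatVol_ne_zero_iff.2 ?_ hv
  have := (quatVol_ne_zero_iff.1 h).submatrix (e := Prod.map Sum.inl id)
    (Sum.inl_injective.prodMap Function.injective_id)
  exact this

end QuatGram

lemma Finset.sum_powersetCard_succ_sum {κ M : Type*} [Fintype κ] [DecidableEq κ] [AddCommMonoid M]
    (j : ℕ) (f : Finset κ → κ → M) :
    ∑ S ∈ powersetCard (j + 1) univ, ∑ t ∈ S, f (S.erase t) t =
      ∑ S ∈ powersetCard j univ, ∑ t ∈ Sᶜ, f S t := by
  rw [Finset.sum_sigma', Finset.sum_sigma']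
  refine Finset.sum_bij' (fun p _ => ⟨p.1.erase p.2, p.2⟩) (fun p _ => ⟨insert p.2 p.1, p.2⟩)
    ?_ ?_ ?_ ?_ ?_
  · rintro ⟨S, t⟩ h
    simp only [Finset.mem_sigma, Finset.mem_powersetCard_univ] at h
    simp [Finset.card_erase_of_mem h.2, h.1]
  · rintro ⟨S, t⟩ h
    simp only [Finset.mem_sigma, Finset.mem_powersetCard_univ, Finset.mem_compl] at h
    simp [Finset.card_insert_of_notMem h.2, h.1]
  · rintro ⟨S, t⟩ h
    simp only [Finset.mem_sigma] at h
    simp [Finset.insert_erase h.2]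
  · rintro ⟨S, t⟩ h
    simp only [Finset.mem_sigma, Finset.mem_compl] at h
    simp [Finset.erase_insert h.2]
  · rintro ⟨S, t⟩ h
    rfl

section ColumnRemoval

variable {α κ : Type*} [Fintype α] [DecidableEq α] [DecidableEq κ]

lemma gram_columns {α κ : Type*} (v : α → κ → ℂ × ℂ) (T : Finset κ) :
    quatBlock (fun i (k : T) => v i k) * (quatBlock fun i (k : T) => v i k)ᴴ =
      ∑ k ∈ T, quatCol (fun i => v i k) * (quatCol fun i => v i k)ᴴ := by
  ext a b
  rw [Matrix.sum_apply, ← Finset.sum_coe_sort T]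
  simp [Matrix.mul_apply, Fintype.sum_prod_type, quatBlock]

lemma quatVol_erase_column (v : α → κ → ℂ × ℂ) (T : Finset κ)
    (hT : quatVol (fun i (k : T) => v i k) ≠ 0) {k : κ} (hk : k ∈ T) :
    (quatVol (fun i (l : T.erase k) => v i l) : ℂ) = quatVol (fun i (l : T) => v i l) *
      (1 - ((quatCol fun i => v i k)ᴴ * (quatBlock (fun i (l : T) => v i l) *
        (quatBlock fun i (l : T) => v i l)ᴴ)⁻¹ * quatCol fun i => v i k).trace / 2) := by
  set X := quatBlock (fun i (l : T) => v i l) * (quatBlock fun i (l : T) => v i l)ᴴ with hX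
  have hXp : X.PosDef := quatVol_ne_zero_iff.1 hT
  set a := quatCol fun i => v i k with ha
  have hYq : IsQuat (aᴴ * X⁻¹ * a) :=
    ((IsQuat.quatBlock _).conjTranspose.mul (IsQuat.inv ((IsQuat.quatBlock _).mul
      (IsQuat.quatBlock _).conjTranspose) hXp.det_pos.ne')).mul (IsQuat.quatBlock _)
  have hY := hYq.eq_smul_one (isHermitian_conjTranspose_mul_mul _ hXp.isHermitian.inv)
  set c := ((aᴴ * X⁻¹ * a) ((), 0) ((), 0)).re
  have hgram : quatBlock (fun i (l : T.erase k) => v i l) *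
      (quatBlock fun i (l : T.erase k) => v i l)ᴴ = X - a * aᴴ := by
    rw [hX, gram_columns, gram_columns, ← Finset.add_sum_erase T _ hk, add_sub_cancel_left]
  have hone : (1 : Matrix (Unit × Fin 2) (Unit × Fin 2) ℂ) - (c : ℂ) • 1 =
      ((1 - c : ℝ) : ℂ) • 1 := by
    push_cast
    rw [sub_smul, one_smul]
  have hc : 0 ≤ 1 - c := by
    have h1 : (X - a * aᴴ).PosSemidef := hgram ▸ posSemidef_self_mul_conjTranspose _
    rw [hXp.posSemidef_sub_mul_conjTranspose_iff, hY, hone] at h1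
    have := h1.diag_nonneg (i := ((), 0))
    rw [Matrix.smul_apply, one_apply_eq, smul_eq_mul, mul_one] at this
    exact_mod_cast this
  have : quatVol (fun i (l : T.erase k) => v i l) =
      quatVol (fun i (l : T) => v i l) * (1 - c) := by
    refine quatVol_eq_of_det_eq (mul_nonneg (quatVol_nonneg _) hc) ?_
    rw [hgram, det_sub_mul_conjTranspose hXp.det_pos.ne', hY, hone, det_smul_one_unit, hX,
      det_quatBlock_mul_conjTranspose]
    push_cast
    ring
  rw [this, hY, trace_smul, trace_one]
  simp

lemma quatVol_erase_column_eq_zero (v : α → κ → ℂ × ℂ) (T : Finset κ)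
    (hT : quatVol (fun i (k : T) => v i k) = 0) {k : κ} (hk : k ∈ T) :
    quatVol (fun i (l : T.erase k) => v i l) = 0 := by
  by_contra h
  refine quatVol_ne_zero_iff.2 ?_ hT
  rw [gram_columns, ← Finset.sum_erase_add T _ hk, ← gram_columns]
  exact (quatVol_ne_zero_iff.1 h).add_posSemidef (posSemidef_self_mul_conjTranspose _)

lemma sum_quatVol_erase_column (v : α → κ → ℂ × ℂ) (T : Finset κ) :
    ∑ k ∈ T, quatVol (fun i (l : T.erase k) => v i l) =
      ((T.card : ℝ) - Fintype.card α) * quatVol (fun i (l : T) => v i l) := by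
  by_cases hT : quatVol (fun i (k : T) => v i k) = 0
  · rw [hT, mul_zero, Finset.sum_eq_zero fun k hk => quatVol_erase_column_eq_zero v T hT hk]
  have hXp := quatVol_ne_zero_iff.1 hT
  apply Complex.ofReal_injective
  rw [Complex.ofReal_sum, Finset.sum_congr rfl fun k hk => quatVol_erase_column v T hT hk,
    ← Finset.mul_sum, Finset.sum_sub_distrib, ← Finset.sum_div]
  have : ∑ k ∈ T, ((quatCol fun i => v i k)ᴴ * (quatBlock (fun i (l : T) => v i (l : κ)) *
      (quatBlock fun i (l : T) => v i (l : κ))ᴴ)⁻¹ * (quatCol fun i => v i k)).trace =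
      2 * Fintype.card α := by
    rw [Finset.sum_congr rfl fun k _ => Matrix.trace_mul_comm _ (quatCol fun i => v i k)]
    simp_rw [← Matrix.mul_assoc]
    rw [← trace_sum, ← Finset.sum_mul, ← gram_columns, mul_nonsing_inv _ hXp.det_pos.ne'.isUnit,
      trace_one]
    simp [mul_comm]
  rw [this]
  push_cast
  simp
  ring

/-- A quaternionic Cauchy–Binet formula: the volume is the sum of the maximal minors. -/
lemma sum_powersetCard_quatVol [Fintype κ] (v : α → κ → ℂ × ℂ)
    (h : Fintype.card α ≤ Fintype.card κ) :
    ∑ T ∈ Finset.powersetCard (Fintype.card α) (Finset.univ : Finset κ),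
        quatVol (fun i (k : T) => v i k) =
      quatVol v := by
  have huniv : quatVol (fun i (k : (Finset.univ : Finset κ)) => v i k) = quatVol v :=
    quatVol_submatrix_equiv (Equiv.refl α) (Equiv.subtypeUnivEquiv Finset.mem_univ) v
  have key : ∀ m d : ℕ, d + m = Fintype.card κ → Fintype.card α ≤ d →
      ∑ T ∈ Finset.powersetCard d (Finset.univ : Finset κ),
        quatVol (fun i (k : T) => v i k) =
        (Fintype.card κ - Fintype.card α).choose m * quatVol v := by
    intro m
    induction m with
    | zero =>
      intro d hd _
      rw [add_zero] at hd
      rw [hd, ← Finset.card_univ, Finset.powersetCard_self, Finset.sum_singleton, huniv]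
      simp
    | succ m ih =>
      intro d hd hα
      have h1 := ih (d + 1) (by omega) (by omega)
      have h2 := Finset.sum_powersetCard_succ_sum d
        fun (T : Finset κ) (_ : κ) => quatVol (fun i (k : T) => v i k)
      simp_rw [sum_quatVol_erase_column, Finset.sum_const, nsmul_eq_mul] at h2
      rw [Finset.sum_congr (s₁ := Finset.powersetCard (d + 1) _) rfl
          (g := fun T : Finset κ => ((d + 1 : ℕ) - Fintype.card α : ℝ) *
          quatVol (fun i (k : T) => v i k)) fun T hT => by
            rw [(Finset.mem_powersetCard.1 hT).2],
        Finset.sum_congr (s₁ := Finset.powersetCard d _) rfl (g := fun T : Finset κ => ((m + 1 : ℕ) : ℝ) *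
          quatVol (fun i (k : T) => v i k)) fun T hT => by
            rw [Finset.card_compl, (Finset.mem_powersetCard.1 hT).2,
              show Fintype.card κ - d = m + 1 by omega],
        ← Finset.mul_sum, ← Finset.mul_sum, h1] at h2
      have h3 := Nat.choose_succ_right_eq (Fintype.card κ - Fintype.card α) m
      rw [show Fintype.card κ - Fintype.card α - m = d + 1 - Fintype.card α by omega] at h3
      have h4 := congrArg (Nat.cast (R := ℝ)) h3
      rw [Nat.cast_mul, Nat.cast_mul, Nat.cast_sub (by omega)] at h4
      have h5 : ((m + 1 : ℕ) : ℝ) ≠ 0 := by positivity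
      apply mul_left_cancel₀ h5
      rw [← h2]
      linear_combination (-quatVol v) * h4
  simpa using key (Fintype.card κ - Fintype.card α) (Fintype.card α) (by omega) le_rfl

end ColumnRemoval

section Rows

variable {ι β : Type*} [DecidableEq ι] [Fintype β]

lemma quatVol_rows_insert_eq_elim (x : ι → β → ℂ × ℂ) {S : Finset ι} {t : ι} (ht : t ∉ S) :
    quatVol (fun i : ↥(insert t S) => x i) =
      quatVol (Sum.elim (fun i : S => x i) fun _ : Unit => x t) := by
  let e := (Finset.subtypeInsertEquivOption ht).trans (Equiv.optionEquivSumPUnit _)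
  rw [← quatVol_submatrix_equiv e (Equiv.refl β)]
  congr 1
  ext1 ⟨i, hi⟩
  by_cases h : i = t
  · subst h
    simp [e, Finset.subtypeInsertEquivOption]
  · simp [e, Finset.subtypeInsertEquivOption, h]

lemma quatVol_rows_insert [DecidableEq β] (x : ι → β → ℂ × ℂ) {S : Finset ι} {t : ι} (ht : t ∉ S)
    (hS : quatVol (fun i : S => x i) ≠ 0) :
    quatVol (fun i : ↥(insert t S) => x i) =
      quatVol (fun i : S => x i) * quatForm (rowCompl (quatBlock fun i : S => x i)) (x t) := by
  rw [quatVol_rows_insert_eq_elim x ht, quatVol_elim hS]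

lemma quatVol_rows_insert_eq_zero (x : ι → β → ℂ × ℂ) {S : Finset ι} {t : ι} (ht : t ∉ S)
    (hS : quatVol (fun i : S => x i) = 0) : quatVol (fun i : ↥(insert t S) => x i) = 0 := by
  rw [quatVol_rows_insert_eq_elim x ht, quatVol_elim_eq_zero hS]

end Rows

lemma LinearMap.trace_restrictScalars_complex {V : Type*} [AddCommGroup V] [Module ℂ V] [Module ℝ V]
    [IsScalarTower ℝ ℂ V] [FiniteDimensional ℂ V] (f : V →ₗ[ℂ] V) :
    LinearMap.trace ℝ V (f.restrictScalars ℝ) = 2 * (LinearMap.trace ℂ V f).re := by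
  classical
  let b := Module.finBasis ℂ V
  rw [LinearMap.trace_eq_matrix_trace ℝ (Complex.basisOneI.smulTower b),
    LinearMap.trace_eq_matrix_trace ℂ b]
  simp only [Matrix.trace, Matrix.diag_apply, LinearMap.toMatrix_apply, Fintype.sum_prod_type,
    Fin.sum_univ_two, Module.Basis.smulTower_repr, Module.Basis.smulTower_apply,
    LinearMap.coe_restrictScalars, map_smul, Complex.re_sum]
  simp [two_mul, Complex.coe_basisOneI_repr]

instance : (volume : Measure (ℂ × ℂ)).IsAddHaarMeasure := by
  rw [Measure.volume_eq_prod]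
  infer_instance

instance {β : Type*} [Fintype β] : (volume : Measure (β → ℂ × ℂ)).IsAddHaarMeasure :=
  Measure.pi.isAddHaarMeasure _

section QuadraticForms

variable {β : Type*} [Fintype β]

/-- The first row of the `2`-row matrix of a quaternion row vector, as a linear equivalence. -/
noncomputable def quatVec : (β → ℂ × ℂ) ≃ₗ[ℂ] (β × Fin 2 → ℂ) where
  toFun y := fun k => if k.2 = 0 then (y k.1).1 else (y k.1).2
  invFun v := fun k => (v (k, 0), v (k, 1))
  map_add' y z := by ext ⟨k, e⟩; fin_cases e <;> simp
  map_smul' c y := by ext ⟨k, e⟩; fin_cases e <;> simp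
  left_inv y := by ext k <;> simp
  right_inv v := by ext ⟨k, e⟩; fin_cases e <;> simp

lemma quatForm_eq (H : Matrix (β × Fin 2) (β × Fin 2) ℂ) (y : β → ℂ × ℂ) :
    quatForm H y = ((replicateRow Unit (quatVec y) * H * (replicateRow Unit (quatVec y))ᴴ) () ()).re :=
  rfl

lemma quatForm_eq_dotProduct (H : Matrix (β × Fin 2) (β × Fin 2) ℂ) (y : β → ℂ × ℂ) :
    quatForm H y = (star (star (quatVec y)) ⬝ᵥ H *ᵥ star (quatVec y)).re := by
  rw [star_star, dotProduct_mulVec]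
  rfl

lemma quatForm_smul (H : Matrix (β × Fin 2) (β × Fin 2) ℂ) (u : ℝ) (y : β → ℂ × ℂ) :
    quatForm H (u • y) = u ^ 2 * quatForm H y := by
  have : quatVec (u • y) = (u : ℂ) • quatVec y := by
    rw [← map_smul]
    rfl
  rw [quatForm_eq_dotProduct, quatForm_eq_dotProduct, this]
  simp only [star_smul, star_star, smul_dotProduct, mulVec_smul, dotProduct_smul, smul_eq_mul,
    Complex.star_def, Complex.conj_ofReal, ← mul_assoc, ← Complex.ofReal_mul, Complex.re_ofReal_mul]
  ring

lemma continuous_quatForm (H : Matrix (β × Fin 2) (β × Fin 2) ℂ) : Continuous (quatForm H) := by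
  have : Continuous (quatVec : (β → ℂ × ℂ) → _) := by
    refine continuous_pi fun k => ?_
    by_cases h : k.2 = 0
    · simp only [quatVec, LinearEquiv.coe_mk, LinearMap.coe_mk, AddHom.coe_mk, h, if_true]
      fun_prop
    · simp only [quatVec, LinearEquiv.coe_mk, LinearMap.coe_mk, AddHom.coe_mk, h, if_false]
      fun_prop
  simp_rw [funext (quatForm_eq_dotProduct H)]
  refine Complex.continuous_re.comp ?_
  simp only [star_star]
  fun_prop

lemma quatForm_nonneg {H : Matrix (β × Fin 2) (β × Fin 2) ℂ} (hH : H.PosSemidef) (y : β → ℂ × ℂ) :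
    0 ≤ quatForm H y := by
  rw [quatForm_eq_dotProduct]
  exact (Complex.le_def.1 (hH.dotProduct_mulVec_nonneg _)).1

lemma exists_le_quatForm {H : Matrix (β × Fin 2) (β × Fin 2) ℂ} (hH : H.PosDef) :
    ∃ κ > 0, ∀ y, κ * ‖y‖ ^ 2 ≤ quatForm H y := by
  have hpos : ∀ y : β → ℂ × ℂ, y ≠ 0 → 0 < quatForm H y := by
    intro y hy
    rw [quatForm_eq_dotProduct]
    refine (Complex.lt_def.1 (hH.dotProduct_mulVec_pos ?_)).1
    simpa using hy
  rcases (Metric.sphere (0 : β → ℂ × ℂ) 1).eq_empty_or_nonempty with h0 | h0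
  · refine ⟨1, one_pos, fun y => ?_⟩
    have : y = 0 := by
      by_contra hy
      have : ‖y‖⁻¹ • y ∈ Metric.sphere (0 : β → ℂ × ℂ) 1 := by
        simp [norm_smul, hy]
      rw [h0] at this
      exact this
    subst this
    simpa using quatForm_nonneg hH.posSemidef 0
  obtain ⟨y₀, hy₀, hmin⟩ := (isCompact_sphere (0 : β → ℂ × ℂ) 1).exists_isMinOn h0
    (continuous_quatForm H).continuousOn
  refine ⟨quatForm H y₀, hpos y₀ ?_, fun y => ?_⟩
  · rintro rfl
    simp at hy₀
  rcases eq_or_ne y 0 with rfl | hy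
  · simpa using quatForm_nonneg hH.posSemidef 0
  have h1 : ‖y‖⁻¹ • y ∈ Metric.sphere (0 : β → ℂ × ℂ) 1 := by
    simp [norm_smul, hy]
  have h2 := hmin h1
  simp only [Set.mem_ofPred_eq, quatForm_smul] at h2
  have h3 : 0 < ‖y‖ := norm_pos_iff.2 hy
  rw [inv_pow, inv_mul_eq_div, le_div_iff₀ (by positivity)] at h2
  exact h2

/-- Right multiplication of quaternion row vectors by a matrix. -/
noncomputable def quatMulRight (K : Matrix (β × Fin 2) (β × Fin 2) ℂ) :
    (β → ℂ × ℂ) →ₗ[ℂ] (β → ℂ × ℂ) :=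
  quatVec.symm.toLinearMap ∘ₗ K.vecMulLinear ∘ₗ quatVec.toLinearMap

lemma quatForm_add_smul_quatMulRight (H K : Matrix (β × Fin 2) (β × Fin 2) ℂ) (t : ℝ)
    (y : β → ℂ × ℂ) : quatForm H (y + t • quatMulRight K y) =
      quatForm H y + t * (quatForm (K * H) y + quatForm (H * Kᴴ) y) +
        t ^ 2 * quatForm (K * H * Kᴴ) y := by
  have : replicateRow Unit (quatVec (y + t • quatMulRight K y)) =
      replicateRow Unit (quatVec y) + (t : ℂ) • (replicateRow Unit (quatVec y) * K) := by
    rw [map_add, ← replicateRow_vecMul, ← replicateRow_smul, ← replicateRow_add]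
    congr 2
    change quatVec ((t : ℂ) • quatMulRight K y) = _
    rw [map_smul, quatMulRight]
    simp
  simp only [quatForm_eq, this]
  simp only [conjTranspose_add, conjTranspose_smul, conjTranspose_mul, Matrix.add_mul,
    Matrix.mul_add, Matrix.smul_mul, Matrix.mul_smul, Matrix.add_apply, Matrix.smul_apply,
    Complex.star_def, Complex.conj_ofReal, Matrix.mul_assoc, smul_eq_mul, Complex.add_re,
    Complex.re_ofReal_mul]
  ring

lemma trace_quatMulRight [DecidableEq β] (K : Matrix (β × Fin 2) (β × Fin 2) ℂ) :
    LinearMap.trace ℂ _ (quatMulRight K) = K.trace := by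
  rw [quatMulRight, ← LinearMap.comp_assoc]
  have := LinearMap.trace_conj' K.vecMulLinear (quatVec (β := β)).symm
  rw [LinearEquiv.conj_apply] at this
  simp only [LinearEquiv.symm_symm] at this
  rw [this, ← mulVecLin_transpose, ← Matrix.toLin'_apply', Matrix.trace_toLin'_eq, trace_transpose]

lemma finrank_quatVec : Module.finrank ℝ (β → ℂ × ℂ) = 4 * Fintype.card β := by
  simp [Module.finrank_pi_fintype, mul_comm]

/-- Integration by parts over one quaternion row. -/
theorem lintegral_quatForm_mul_rpow_mul_truncPow [DecidableEq β] [Nonempty β]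
    {M P Q : Matrix (β × Fin 2) (β × Fin 2) ℂ} (hM : M.PosDef) (hP : P.PosSemidef)
    (hQ : Q.PosSemidef) (hPMQ : P * M * Q = Q) {a b c e : ℝ} (ha : 0 ≤ a) (hb : 0 ≤ b) (hc : 0 ≤ c)
    (he : 0 ≤ e) (htr : (P * M).trace.re = a - e) :
    ENNReal.ofReal (c + 2 * Fintype.card β + b + 1) * (∫⁻ y : β → ℂ × ℂ, ENNReal.ofReal
        (quatForm P y * (quatForm Q y ^ b * truncPow c (1 - quatForm M⁻¹ y)))) +
      ENNReal.ofReal e * ∫⁻ y : β → ℂ × ℂ, ENNReal.ofReal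
        (quatForm Q y ^ b * truncPow c (1 - quatForm M⁻¹ y)) =
    ENNReal.ofReal (a + b) * ∫⁻ y : β → ℂ × ℂ, ENNReal.ofReal
        (quatForm Q y ^ b * truncPow c (1 - quatForm M⁻¹ y)) := by
  obtain ⟨κ, hκ, hs⟩ := exists_le_quatForm hM.inv
  have hMM : M * M⁻¹ = 1 := mul_nonsing_inv _ hM.det_pos.ne'.isUnit
  have hMM' : M⁻¹ * M = 1 := nonsing_inv_mul _ hM.det_pos.ne'.isUnit
  have hK : (P * M)ᴴ = M * P := by
    rw [conjTranspose_mul, hM.isHermitian.eq, hP.isHermitian.eq]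
  have hQMP : Q * (M * P) = Q := by
    have := congrArg conjTranspose hPMQ
    rwa [conjTranspose_mul, hK, hQ.isHermitian.eq] at this
  have hr : P * M * P = P * M * Pᴴ := by rw [hP.isHermitian.eq]
  have key := lintegral_mul_rpow_mul_truncPow (volume : Measure (β → ℂ × ℂ))
    (L := (quatMulRight (P * M)).restrictScalars ℝ) (s := quatForm M⁻¹) (p := quatForm P)
    (q := quatForm Q) (r := quatForm (P * M * P)) (a := a) (b := b) (c := c) (e := e) ha hb hc he
    (continuous_quatForm _) (continuous_quatForm _) (continuous_quatForm _) (continuous_quatForm _)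
    (quatForm_nonneg hP) (quatForm_nonneg hQ)
    (quatForm_nonneg (hr ▸ hM.posSemidef.mul_mul_conjTranspose_same P)) hκ hs
    (quatForm_smul _) (quatForm_smul _) (quatForm_smul _) (quatForm_smul _) ?_ ?_ ?_
  · rwa [finrank_quatVec, Nat.cast_mul, show (4 : ℕ) * (Fintype.card β : ℝ) / 2 =
      2 * Fintype.card β by push_cast; ring] at key
  · intro t y
    rw [LinearMap.coe_restrictScalars, quatForm_add_smul_quatMulRight, hK, Matrix.mul_assoc P, hMM,
      ← Matrix.mul_assoc M⁻¹, hMM', Matrix.mul_one, Matrix.one_mul, ← Matrix.mul_assoc P M P]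
    ring
  · intro t y
    rw [LinearMap.coe_restrictScalars, quatForm_add_smul_quatMulRight, hK, hPMQ, hQMP]
    ring
  · rw [LinearMap.trace_restrictScalars_complex, trace_quatMulRight, htr]
    ring

end QuadraticForms

lemma continuous_quatBlock {α β : Type*} :
    Continuous (quatBlock : (α → β → ℂ × ℂ) → Matrix (α × Fin 2) (β × Fin 2) ℂ) := by
  refine continuous_matrix fun i j => ?_
  simp only [quatBlock, Matrix.of_apply]
  split_ifs <;> fun_prop

lemma continuous_quatVol {α β : Type*} [Fintype α] [DecidableEq α] [Fintype β] :
    Continuous (quatVol : (α → β → ℂ × ℂ) → ℝ) := by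
  have := continuous_quatBlock (α := α) (β := β)
  unfold quatVol
  fun_prop

section Weight

variable {n : ℕ} {β₁ β₂ : ℝ}

lemma quatMatrix_mul_conjTranspose_isHermitian (x : Fin n → Fin n → ℂ × ℂ) :
    (1 - (quatMatrix n x)ᴴ * quatMatrix n x).IsHermitian :=
  isHermitian_one.sub (isHermitian_conjTranspose_mul_self _)

lemma measurable_quatAntiSphericalWeight (n : ℕ) (β₁ β₂ : ℝ) :
    Measurable (quatAntiSphericalWeight n β₁ β₂) := by
  have hc : Continuous (quatMatrix n) := continuous_quatBlock
  have hset : MeasurableSet {x : Fin n → Fin n → ℂ × ℂ |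
      (1 - (quatMatrix n x)ᴴ * quatMatrix n x).PosDef} := by
    have : {x : Fin n → Fin n → ℂ × ℂ | (1 - (quatMatrix n x)ᴴ * quatMatrix n x).PosDef} =
        (⋂ v : Fin n × Fin 2 → ℂ,
          {x | 0 ≤ (star v ⬝ᵥ (1 - (quatMatrix n x)ᴴ * quatMatrix n x) *ᵥ v).re}) ∩
        {x | (1 - (quatMatrix n x)ᴴ * quatMatrix n x).det = 0}ᶜ := by
      ext x
      simp only [Set.mem_inter_iff, Set.mem_iInter, Set.mem_ofPred_eq, Set.mem_compl_iff]
      constructor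
      · intro h
        exact ⟨fun v => (Complex.le_def.1 (h.posSemidef.dotProduct_mulVec_nonneg v)).1,
          h.det_pos.ne'⟩
      · rintro ⟨h1, h2⟩
        have hH := quatMatrix_mul_conjTranspose_isHermitian x
        refine (PosSemidef.posDef_iff_det_ne_zero
          (PosSemidef.of_dotProduct_mulVec_nonneg hH fun v => Complex.le_def.2 ⟨h1 v, ?_⟩)).2 h2
        exact (hH.im_star_dotProduct_mulVec_self v).symm
    rw [this]
    refine MeasurableSet.inter (IsClosed.measurableSet (isClosed_iInter fun v =>
      isClosed_le continuous_const (by fun_prop))) ?_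
    exact (IsClosed.measurableSet (isClosed_eq (by fun_prop) continuous_const)).compl
  have h1 : Measurable fun x => ((quatMatrix n x)ᴴ * quatMatrix n x).det.re :=
    Continuous.measurable (by fun_prop)
  have h2 : Measurable fun x => (1 - (quatMatrix n x)ᴴ * quatMatrix n x).det.re :=
    Continuous.measurable (by fun_prop)
  exact ((h1.pow_const β₁).mul (h2.pow_const β₂)).indicator hset

lemma quatAntiSphericalWeight_nonneg (x : Fin n → Fin n → ℂ × ℂ) :
    0 ≤ quatAntiSphericalWeight n β₁ β₂ x := by
  refine Set.indicator_nonneg (fun x hx => ?_) x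
  refine mul_nonneg (Real.rpow_nonneg ?_ _) (Real.rpow_nonneg ?_ _)
  · exact (Complex.le_def.1 (posSemidef_conjTranspose_mul_self (quatMatrix n x)).det_nonneg).1
  · exact (Complex.le_def.1 (PosDef.det_pos hx).le).1

lemma gram_rows {ι β : Type*} (x : ι → β → ℂ × ℂ) (S : Finset ι) :
    (quatBlock fun i : S => x i)ᴴ * (quatBlock fun i : S => x i) =
      ∑ s ∈ S, (quatRow (x s))ᴴ * quatRow (x s) := by
  ext a b
  rw [Matrix.sum_apply, ← Finset.sum_coe_sort S]
  simp [Matrix.mul_apply, Fintype.sum_prod_type, quatBlock]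

lemma gram_quatMatrix (x : Fin n → Fin n → ℂ × ℂ) :
    (quatMatrix n x)ᴴ * quatMatrix n x = ∑ s, (quatRow (x s))ᴴ * quatRow (x s) := by
  ext a b
  rw [Matrix.sum_apply]
  simp [Matrix.mul_apply, Fintype.sum_prod_type, quatMatrix, quatBlock]

/-- The matrix `I - C† C`, where `C` consists of all quaternion rows except the `t`-th. -/
noncomputable def complGram (x : Fin n → Fin n → ℂ × ℂ) (t : Fin n) :
    Matrix (Fin n × Fin 2) (Fin n × Fin 2) ℂ :=
  1 - (quatBlock fun i : Finset.univ.erase t => x i)ᴴ * quatBlock fun i : Finset.univ.erase t => x i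

lemma isQuat_complGram (x : Fin n → Fin n → ℂ × ℂ) (t : Fin n) : IsQuat (complGram x t) :=
  IsQuat.one.sub ((IsQuat.quatBlock _).conjTranspose.mul (IsQuat.quatBlock _))

lemma one_sub_gram_update (x : Fin n → Fin n → ℂ × ℂ) (t : Fin n) (y : Fin n → ℂ × ℂ) :
    1 - (quatMatrix n (Function.update x t y))ᴴ * quatMatrix n (Function.update x t y) =
      complGram x t - (quatRow y)ᴴ * quatRow y := by
  rw [gram_quatMatrix, complGram, gram_rows, ← Finset.sum_erase_add _ _ (Finset.mem_univ t),
    Function.update_self, Finset.sum_congr rfl fun s hs => by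
      rw [Function.update_of_ne (Finset.ne_of_mem_erase hs)]]
  abel

lemma det_gram_update (x : Fin n → Fin n → ℂ × ℂ) (t : Fin n) :
    ∃ C ≥ 0, ∃ Q : Matrix (Fin n × Fin 2) (Fin n × Fin 2) ℂ, Q.PosSemidef ∧
      (∀ s ≠ t, quatRow (x s) * Q = 0) ∧ ∀ y, ((quatMatrix n (Function.update x t y))ᴴ *
        quatMatrix n (Function.update x t y)).det.re ^ β₁ =
          C * quatForm Q y ^ (2 * β₁) := by
  have hV : ∀ y, ((quatMatrix n (Function.update x t y))ᴴ *
        quatMatrix n (Function.update x t y)).det.re =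
        quatVol (fun i : ↥(insert t (Finset.univ.erase t)) => Function.update x t y i) ^ 2 := by
    intro y
    rw [det_mul_comm, quatMatrix_eq_quatBlock, det_quatBlock_mul_conjTranspose,
      ← Complex.ofReal_pow, Complex.ofReal_re]
    congr 1
    exact (quatVol_submatrix_equiv (Equiv.subtypeUnivEquiv fun i => by
      rw [Finset.insert_erase (Finset.mem_univ t)]; exact Finset.mem_univ i) (Equiv.refl _)
      (Function.update x t y)).symm
  have hupd : ∀ y, (fun i : ↥(Finset.univ.erase t) => Function.update x t y i) =
      fun i : ↥(Finset.univ.erase t) => x i := by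
    intro y
    ext1 i
    rw [Function.update_of_ne (Finset.ne_of_mem_erase i.2)]
  by_cases h0 : quatVol (fun i : ↥(Finset.univ.erase t) => x i) = 0
  · refine ⟨1, zero_le_one, 0, PosSemidef.zero, fun s _ => Matrix.mul_zero _, fun y => ?_⟩
    rw [hV, quatVol_rows_insert_eq_zero _ (Finset.notMem_erase t _) (by rw [hupd, h0])]
    have : quatForm (0 : Matrix (Fin n × Fin 2) (Fin n × Fin 2) ℂ) y = 0 := by
      simp [quatForm]
    rw [this, Real.rpow_mul le_rfl, Real.rpow_two, one_mul]
  · have hd := (quatVol_ne_zero_iff.1 h0).det_pos.ne'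
    refine ⟨quatVol (fun i : ↥(Finset.univ.erase t) => x i) ^ (2 * β₁),
      Real.rpow_nonneg (quatVol_nonneg _) _,
      rowCompl (quatBlock fun i : ↥(Finset.univ.erase t) => x i), rowCompl_posSemidef hd, ?_, ?_⟩
    · intro s hs
      have := mul_rowCompl hd
      ext ⟨_, e⟩ j
      exact congrFun (congrFun this (⟨s, Finset.mem_erase.2 ⟨hs, Finset.mem_univ s⟩⟩, e)) j
    · intro y
      have h1 := quatForm_nonneg (rowCompl_posSemidef hd) y
      rw [hV, quatVol_rows_insert _ (Finset.notMem_erase t _) (by rw [hupd]; exact h0), hupd,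
        Function.update_self, ← Real.mul_rpow (quatVol_nonneg _) h1,
        Real.rpow_mul (mul_nonneg (quatVol_nonneg _) h1), Real.rpow_two]

lemma quatAntiSphericalWeight_update (x : Fin n → Fin n → ℂ × ℂ) (t : Fin n) :
    (∀ y, quatAntiSphericalWeight n β₁ β₂ (Function.update x t y) = 0) ∨
    (complGram x t).PosDef ∧ ∃ C ≥ 0, ∃ Q : Matrix (Fin n × Fin 2) (Fin n × Fin 2) ℂ,
      Q.PosSemidef ∧ (∀ s ≠ t, quatRow (x s) * Q = 0) ∧
      ∀ y, quatAntiSphericalWeight n β₁ β₂ (Function.update x t y) =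
        C * (quatForm Q y ^ (2 * β₁) * truncPow (2 * β₂) (1 - quatForm (complGram x t)⁻¹ y)) := by
  by_cases hM : (complGram x t).PosDef
  swap
  · left
    intro y
    refine Set.indicator_of_notMem (fun h => hM ?_) _
    rw [Set.mem_ofPred_eq, one_sub_gram_update] at h
    have := h.add_posSemidef (posSemidef_conjTranspose_mul_self (quatRow y))
    rwa [sub_add_cancel] at this
  right
  obtain ⟨C, hC, Q, hQ, hxQ, hD⟩ := det_gram_update (β₁ := β₁) x t
  have hdM := hM.det_pos
  have hdMre : 0 < (complGram x t).det.re := (Complex.lt_def.1 hdM).1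
  refine ⟨hM, C * (complGram x t).det.re ^ β₂, mul_nonneg hC (Real.rpow_nonneg hdMre.le _), Q, hQ,
    hxQ, fun y => ?_⟩
  set s := quatForm (complGram x t)⁻¹ y with hs
  have hrank : ((quatRow y)ᴴ)ᴴ * (complGram x t)⁻¹ * (quatRow y)ᴴ = (s : ℂ) • 1 := by
    rw [conjTranspose_conjTranspose, quatRow_mul_mul_conjTranspose
      ((isQuat_complGram x t).inv hdM.ne') hM.isHermitian.inv]
  have hone : (1 : Matrix (Unit × Fin 2) (Unit × Fin 2) ℂ) - (s : ℂ) • 1 =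
      ((1 - s : ℝ) : ℂ) • 1 := by
    push_cast
    rw [sub_smul, one_smul]
  have hdet : (complGram x t - (quatRow y)ᴴ * quatRow y).det =
      (((complGram x t).det.re * (1 - s) ^ 2 : ℝ) : ℂ) := by
    have h := det_sub_mul_conjTranspose hdM.ne' (quatRow y)ᴴ
    rw [hrank, hone, det_smul_one_unit, conjTranspose_conjTranspose] at h
    rw [h]
    have h2 := (Complex.lt_def.1 hdM).2
    have : (complGram x t).det = ((complGram x t).det.re : ℂ) := by
      apply Complex.ext <;> simp [← h2]
    rw [Complex.ofReal_mul, ← this, Complex.ofReal_pow]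
  have hiff : (complGram x t - (quatRow y)ᴴ * quatRow y).PosDef ↔ 0 < 1 - s := by
    have h := hM.posSemidef_sub_mul_conjTranspose_iff (quatRow y)ᴴ
    rw [hrank, hone, conjTranspose_conjTranspose] at h
    constructor
    · intro hp
      have h1 := (h.1 hp.posSemidef).diag_nonneg (i := ((), 0))
      rw [Matrix.smul_apply, one_apply_eq, smul_eq_mul, mul_one, Complex.zero_le_real] at h1
      refine lt_of_le_of_ne h1 fun h2 => hp.det_pos.ne' ?_
      rw [hdet, ← h2]
      simp
    · intro hp
      refine (PosSemidef.posDef_iff_det_ne_zero (h.2 ?_)).2 ?_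
      · exact PosSemidef.one.smul (Complex.zero_le_real.2 hp.le)
      · rw [hdet, Complex.ofReal_ne_zero]
        positivity
  unfold quatAntiSphericalWeight
  by_cases hp : 0 < 1 - s
  · rw [Set.indicator_of_mem (by rw [Set.mem_ofPred_eq, one_sub_gram_update, hiff]; exact hp), hD,
      one_sub_gram_update, hdet, Complex.ofReal_re, Real.mul_rpow hdMre.le (by positivity),
      ← Real.rpow_two, ← Real.rpow_mul hp.le, truncPow, if_pos hp]
    ring
  · rw [Set.indicator_of_notMem (by rw [Set.mem_ofPred_eq, one_sub_gram_update, hiff]; exact hp),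
      truncPow, if_neg hp]
    ring

end Weight

section RowRecursion

variable {n : ℕ} {β₁ β₂ : ℝ}

/-- The quaternionic volume of the rows of `x` indexed by `S`. -/
noncomputable def rowVol (S : Finset (Fin n)) (x : Fin n → Fin n → ℂ × ℂ) : ℝ :=
  quatVol fun i : S => x i

lemma rowVol_nonneg (S : Finset (Fin n)) (x : Fin n → Fin n → ℂ × ℂ) : 0 ≤ rowVol S x :=
  quatVol_nonneg _

lemma continuous_rowVol (S : Finset (Fin n)) : Continuous (rowVol S) :=
  continuous_quatVol.comp (by fun_prop)

lemma rowVol_update {S : Finset (Fin n)} {t : Fin n} (ht : t ∉ S) (x : Fin n → Fin n → ℂ × ℂ)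
    (y : Fin n → ℂ × ℂ) : rowVol S (Function.update x t y) = rowVol S x := by
  unfold rowVol
  congr 1
  ext1 i
  rw [Function.update_of_ne (ne_of_mem_of_not_mem i.2 ht)]

lemma exists_rowVol_insert (S : Finset (Fin n)) (x : Fin n → Fin n → ℂ × ℂ)
    (hS : rowVol S x ≠ 0) :
    ∃ P : Matrix (Fin n × Fin 2) (Fin n × Fin 2) ℂ, P.PosSemidef ∧ IsQuat P ∧
      P.trace = 2 * (n - S.card) ∧ (∀ s ∈ S, quatForm P (x s) = 0) ∧
      (∀ Q : Matrix (Fin n × Fin 2) (Fin n × Fin 2) ℂ, (∀ s ∈ S, quatRow (x s) * Q = 0) →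
        P * Q = Q) ∧
      ∀ t ∉ S, ∀ y, rowVol (insert t S) (Function.update x t y) = rowVol S x * quatForm P y := by
  have hd := (quatVol_ne_zero_iff.1 hS).det_pos.ne'
  refine ⟨rowCompl (quatBlock fun i : S => x i), rowCompl_posSemidef hd, isQuat_rowCompl hS,
    ?_, ?_, ?_, ?_⟩
  · rw [trace_rowCompl hd]
    simp
    ring
  · intro s hs
    have h : quatRow (x s) * rowCompl (quatBlock fun i : S => x i) = 0 := by
      ext ⟨_, e⟩ j
      exact congrFun (congrFun (mul_rowCompl hd) (⟨s, hs⟩, e)) j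
    rw [quatForm, h]
    simp
  · intro Q hQ
    refine rowCompl_mul_of_mul_eq_zero ?_
    ext ⟨⟨s, hs⟩, e⟩ j
    exact congrFun (congrFun (hQ s hs) ((), e)) j
  · intro t ht y
    have h := rowVol_update ht x y
    unfold rowVol at h ⊢
    have hupd : (fun i : S => Function.update x t y i) = fun i : S => x i := by
      ext1 i
      rw [Function.update_of_ne (ne_of_mem_of_not_mem i.2 ht)]
    rw [quatVol_rows_insert _ ht (by rw [h]; exact hS), hupd, Function.update_self]

lemma rowVol_insert_eq_zero {S : Finset (Fin n)} {x : Fin n → Fin n → ℂ × ℂ}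
    (hS : rowVol S x = 0) (t : Fin n) : rowVol (insert t S) x = 0 := by
  by_cases ht : t ∈ S
  · rwa [Finset.insert_eq_of_mem ht]
  · exact quatVol_rows_insert_eq_zero x ht hS

lemma lintegral_update_rowVol [NeZero n] (hβ₁ : 0 ≤ β₁) (hβ₂ : 0 ≤ β₂) (x : Fin n → Fin n → ℂ × ℂ)
    (S : Finset (Fin n)) {t : Fin n} (ht : t ∉ S) :
    ENNReal.ofReal (2 * β₂ + 2 * n + 2 * β₁ + 1) * (∫⁻ y, ENNReal.ofReal
        (quatAntiSphericalWeight n β₁ β₂ (Function.update x t y) *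
          rowVol (insert t S) (Function.update x t y))) +
      2 * ∑ s ∈ (insert t S)ᶜ, ∫⁻ y, ENNReal.ofReal
        (quatAntiSphericalWeight n β₁ β₂ (Function.update x t y) *
          rowVol (insert s S) (Function.update x t y)) =
    ENNReal.ofReal (2 * (n - S.card) + 2 * β₁) * ∫⁻ y, ENNReal.ofReal
        (quatAntiSphericalWeight n β₁ β₂ (Function.update x t y) *
          rowVol S (Function.update x t y)) := by
  by_cases hS : rowVol S x = 0
  · have h0 : ∀ y, rowVol S (Function.update x t y) = 0 := fun y => by rw [rowVol_update ht, hS]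
    simp [h0, rowVol_insert_eq_zero (h0 _)]
  rcases quatAntiSphericalWeight_update (β₁ := β₁) (β₂ := β₂) x t with
    hW | ⟨hM, C, hC, Q, hQ, hxQ, hW⟩
  · simp [hW]
  obtain ⟨P, hP, hPq, hPtr, hP0, hPQ, hPV⟩ := exists_rowVol_insert S x hS
  have hMQ : complGram x t * Q = Q := by
    rw [complGram, gram_rows, Matrix.sub_mul, Finset.sum_mul, Finset.sum_eq_zero fun s hs => by
      rw [Matrix.mul_assoc, hxQ s (Finset.ne_of_mem_erase hs), Matrix.mul_zero]]
    simp
  have hPMQ : P * complGram x t * Q = Q := by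
    rw [Matrix.mul_assoc, hMQ, hPQ Q fun s hs => hxQ s (ne_of_mem_of_not_mem hs ht)]
  have htr : (P * complGram x t).trace.re =
      2 * (n - S.card) - 2 * ∑ s ∈ (insert t S)ᶜ, quatForm P (x s) := by
    have h1 : ∑ s ∈ (insert t S)ᶜ, quatForm P (x s) =
        ∑ s ∈ Finset.univ.erase t, quatForm P (x s) := by
      refine Finset.sum_subset (fun s hs => ?_) fun s hs hs' => ?_
      · simp only [Finset.mem_compl, Finset.mem_insert, not_or] at hs
        simp [hs.1]
      · simp only [Finset.mem_compl, Finset.mem_insert, not_or, not_and, not_not] at hs'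
        exact hP0 s (hs' (Finset.ne_of_mem_erase hs))
    have h2 : ∀ s, (P * ((quatRow (x s))ᴴ * quatRow (x s))).trace = 2 * (quatForm P (x s) : ℂ) := by
      intro s
      rw [← Matrix.mul_assoc, trace_mul_comm, ← Matrix.mul_assoc,
        quatRow_mul_mul_conjTranspose hPq hP.isHermitian, trace_smul, trace_one]
      simp [mul_comm]
    rw [complGram, gram_rows, Matrix.mul_sub, Matrix.mul_one, trace_sub, hPtr, Finset.mul_sum,
      trace_sum, Finset.sum_congr rfl fun s _ => h2 s, ← Finset.mul_sum, h1, ← Complex.ofReal_sum]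
    simp
  have : Nonempty (Fin n) := ⟨0⟩
  have hcard : (S.card : ℝ) ≤ n := by
    exact_mod_cast (Finset.card_le_univ S).trans_eq (Fintype.card_fin n)
  have he : 0 ≤ ∑ s ∈ (insert t S)ᶜ, quatForm P (x s) :=
    Finset.sum_nonneg fun s _ => quatForm_nonneg hP _
  have key := lintegral_quatForm_mul_rpow_mul_truncPow hM hP hQ hPMQ
    (a := 2 * (n - S.card)) (b := 2 * β₁) (c := 2 * β₂) (by linarith) (by positivity)
    (by positivity) (by positivity) htr
  rw [Fintype.card_fin] at key
  set f : (Fin n → ℂ × ℂ) → ℝ := fun y =>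
    quatForm Q y ^ (2 * β₁) * truncPow (2 * β₂) (1 - quatForm (complGram x t)⁻¹ y) with hf
  have hV := rowVol_nonneg S x
  have hconst : ∀ k : ℝ, 0 ≤ k → ∀ g : (Fin n → ℂ × ℂ) → ℝ, ∫⁻ y, ENNReal.ofReal (k * g y) =
      ENNReal.ofReal k * ∫⁻ y, ENNReal.ofReal (g y) := by
    intro k hk g
    simp_rw [ENNReal.ofReal_mul hk]
    exact lintegral_const_mul' _ _ ENNReal.ofReal_ne_top
  have e1 : (∫⁻ y, ENNReal.ofReal (quatAntiSphericalWeight n β₁ β₂ (Function.update x t y) *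
      rowVol (insert t S) (Function.update x t y))) =
      ENNReal.ofReal (C * rowVol S x) * ∫⁻ y, ENNReal.ofReal (quatForm P y * f y) := by
    rw [← hconst _ (mul_nonneg hC hV)]
    refine lintegral_congr fun y => ?_
    rw [hW, hPV t ht]
    simp only [hf]
    congr 1
    ring
  have e2 : (∫⁻ y, ENNReal.ofReal (quatAntiSphericalWeight n β₁ β₂ (Function.update x t y) *
      rowVol S (Function.update x t y))) =
      ENNReal.ofReal (C * rowVol S x) * ∫⁻ y, ENNReal.ofReal (f y) := by
    rw [← hconst _ (mul_nonneg hC hV)]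
    refine lintegral_congr fun y => ?_
    rw [hW, rowVol_update ht]
    simp only [hf]
    congr 1
    ring
  have e3 : ∀ s ∈ (insert t S)ᶜ,
      (∫⁻ y, ENNReal.ofReal (quatAntiSphericalWeight n β₁ β₂ (Function.update x t y) *
        rowVol (insert s S) (Function.update x t y))) =
      ENNReal.ofReal (C * rowVol S x) * (ENNReal.ofReal (quatForm P (x s)) *
        ∫⁻ y, ENNReal.ofReal (f y)) := by
    intro s hs
    simp only [Finset.mem_compl, Finset.mem_insert, not_or] at hs
    have h := hPV s hs.2 (x s)
    rw [Function.update_eq_self] at h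
    rw [← hconst _ (quatForm_nonneg hP _), ← hconst _ (mul_nonneg hC hV)]
    refine lintegral_congr fun y => ?_
    rw [hW, rowVol_update (by simp [ht, Ne.symm hs.1]), h]
    simp only [hf]
    congr 1
    ring
  rw [e1, e2, Finset.sum_congr rfl e3, ← Finset.mul_sum, ← Finset.sum_mul,
    ← ENNReal.ofReal_sum_of_nonneg fun s _ => quatForm_nonneg hP _]
  rw [ENNReal.ofReal_mul zero_le_two, ENNReal.ofReal_ofNat] at key
  rw [mul_left_comm (ENNReal.ofReal (2 * (_ - _) + _)), ← key]
  ring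

/-- The moment of the volume of a set of rows against the ensemble weight. -/
noncomputable def rowMoment (β₁ β₂ : ℝ) (S : Finset (Fin n)) : ENNReal :=
  ∫⁻ x, ENNReal.ofReal (quatAntiSphericalWeight n β₁ β₂ x * rowVol S x)

lemma measurable_weight_mul_rowVol (S : Finset (Fin n)) : Measurable fun x =>
    ENNReal.ofReal (quatAntiSphericalWeight n β₁ β₂ x * rowVol S x) :=
  ((measurable_quatAntiSphericalWeight n β₁ β₂).mul
    (continuous_rowVol S).measurable).ennreal_ofReal

lemma rowMoment_insert [NeZero n] (hβ₁ : 0 ≤ β₁) (hβ₂ : 0 ≤ β₂) (S : Finset (Fin n)) {t : Fin n}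
    (ht : t ∉ S) :
    ENNReal.ofReal (2 * β₂ + 2 * n + 2 * β₁ + 1) * rowMoment β₁ β₂ (insert t S) +
      2 * ∑ s ∈ (insert t S)ᶜ, rowMoment β₁ β₂ (insert s S) =
    ENNReal.ofReal (2 * (n - S.card) + 2 * β₁) * rowMoment β₁ β₂ S := by
  have hm := measurable_weight_mul_rowVol (n := n) (β₁ := β₁) (β₂ := β₂)
  unfold rowMoment
  rw [← lintegral_const_mul _ (hm _), ← lintegral_finsetSum _ fun s _ => hm _,
    ← lintegral_const_mul _ (Finset.measurable_fun_sum _ fun s _ => hm _),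
    ← lintegral_add_left ((hm _).const_mul _), ← lintegral_const_mul _ (hm _)]
  refine lintegral_eq_of_lmarginal_eq {t} (((hm _).const_mul _).add
    ((Finset.measurable_fun_sum _ fun s _ => hm _).const_mul _)) ((hm _).const_mul _) ?_
  ext x
  have hm' := fun S => (hm S).comp (measurable_update x (a := t))
  simp only [Function.comp_def] at hm'
  simp only [lmarginal_singleton]
  rw [lintegral_const_mul _ (hm' _), ← lintegral_update_rowVol hβ₁ hβ₂ x S ht,
    lintegral_add_left ((hm' _).const_mul _), lintegral_const_mul _ (hm' _),
    lintegral_const_mul _ (Finset.measurable_fun_sum _ fun s _ => hm' _),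
    lintegral_finsetSum _ fun s _ => hm' _]

lemma Finset.sum_sum_erase {κ M : Type*} [DecidableEq κ] [AddCommMonoid M] (A : Finset κ)
    (f : κ → M) : ∑ t ∈ A, ∑ s ∈ A.erase t, f s = (A.card - 1) • ∑ s ∈ A, f s := by
  rw [Finset.sum_comm' (t' := A) (s' := fun s => A.erase s)
    (by simp only [Finset.mem_erase]; tauto), Finset.smul_sum]
  exact Finset.sum_congr rfl fun s hs => by rw [Finset.sum_const, Finset.card_erase_of_mem hs]

/-- Closed recursion for the summed row moments. -/
lemma sum_rowMoment_succ [NeZero n] (hβ₁ : 0 ≤ β₁) (hβ₂ : 0 ≤ β₂) (j : ℕ) (hj : j + 1 ≤ n) :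
    (j + 1) * ENNReal.ofReal (2 * β₂ + 2 * n + 2 * β₁ + 1 + 2 * (n - (j + 1))) *
      ∑ S ∈ Finset.powersetCard (j + 1) (Finset.univ : Finset (Fin n)), rowMoment β₁ β₂ S =
    (n - j : ℕ) * ENNReal.ofReal (2 * (n - j) + 2 * β₁) *
      ∑ S ∈ Finset.powersetCard j (Finset.univ : Finset (Fin n)), rowMoment β₁ β₂ S := by
  have h := Finset.sum_congr (s₁ := Finset.powersetCard j (Finset.univ : Finset (Fin n))) rfl
    fun S _ => Finset.sum_congr (s₁ := Sᶜ) rfl fun t ht =>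
      rowMoment_insert hβ₁ hβ₂ S (Finset.mem_compl.1 ht)
  have h1 := Finset.sum_powersetCard_succ_sum j
    fun (S : Finset (Fin n)) (t : Fin n) => rowMoment β₁ β₂ (insert t S)
  rw [Finset.sum_congr (s₁ := Finset.powersetCard (j + 1) _) rfl
    (g := fun T : Finset (Fin n) => ((j + 1 : ℕ) : ENNReal) * rowMoment β₁ β₂ T) fun T hT => by
      rw [Finset.sum_congr rfl fun t ht => by rw [Finset.insert_erase ht], Finset.sum_const,
        (Finset.mem_powersetCard.1 hT).2, nsmul_eq_mul], ← Finset.mul_sum] at h1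
  have hcard : ∀ S ∈ Finset.powersetCard j (Finset.univ : Finset (Fin n)), Sᶜ.card = n - j :=
    fun S hS => by rw [Finset.card_compl, (Finset.mem_powersetCard.1 hS).2, Fintype.card_fin]
  have h2 : ∀ S ∈ Finset.powersetCard j (Finset.univ : Finset (Fin n)),
      ∑ t ∈ Sᶜ, ∑ s ∈ (insert t S)ᶜ, rowMoment β₁ β₂ (insert s S) =
        ((n - (j + 1) : ℕ) : ENNReal) * ∑ s ∈ Sᶜ, rowMoment β₁ β₂ (insert s S) := by
    intro S hS
    simp_rw [Finset.compl_insert]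
    rw [Finset.sum_sum_erase, hcard S hS, nsmul_eq_mul, Nat.sub_sub]
  have h3 : ∀ S ∈ Finset.powersetCard j (Finset.univ : Finset (Fin n)),
      ∑ t ∈ Sᶜ, ENNReal.ofReal (2 * (n - S.card) + 2 * β₁) * rowMoment β₁ β₂ S =
        (n - j : ℕ) * ENNReal.ofReal (2 * (n - j) + 2 * β₁) * rowMoment β₁ β₂ S := by
    intro S hS
    rw [Finset.sum_const, hcard S hS, (Finset.mem_powersetCard.1 hS).2, nsmul_eq_mul, mul_assoc]
  simp_rw [Finset.sum_add_distrib, ← Finset.mul_sum] at h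
  rw [Finset.sum_congr rfl h2, ← Finset.mul_sum, ← h1] at h
  simp_rw [Finset.mul_sum] at h
  rw [Finset.sum_congr (s₁ := Finset.powersetCard j _) rfl h3] at h
  simp_rw [← Finset.mul_sum] at h
  have hsplit : ENNReal.ofReal (2 * β₂ + 2 * n + 2 * β₁ + 1 + 2 * (n - (j + 1))) =
      ENNReal.ofReal (2 * β₂ + 2 * n + 2 * β₁ + 1) + 2 * ((n - (j + 1) : ℕ) : ENNReal) := by
    have hj' : (0 : ℝ) ≤ n - (j + 1) := by
      rw [sub_nonneg]
      exact_mod_cast hj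
    rw [ENNReal.ofReal_add (by positivity) (by positivity), ENNReal.ofReal_mul zero_le_two,
      ENNReal.ofReal_ofNat, ← ENNReal.ofReal_natCast (n - (j + 1)), Nat.cast_sub hj]
    push_cast
    rfl
  rw [← h, hsplit]
  push_cast
  ring

end RowRecursion

instance {α β : Type*} [Fintype α] [Fintype β] :
    (volume : Measure (α → β → ℂ × ℂ)).IsAddHaarMeasure :=
  Measure.pi.isAddHaarMeasure _

section Integrability

variable {n : ℕ} {β₁ β₂ : ℝ}

lemma mem_closedBall_of_quatAntiSphericalWeight_ne_zero {x : Fin n → Fin n → ℂ × ℂ}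
    (hx : quatAntiSphericalWeight n β₁ β₂ x ≠ 0) : x ∈ Metric.closedBall 0 1 := by
  have hpos : (1 - (quatMatrix n x)ᴴ * quatMatrix n x).PosDef := by
    by_contra h
    exact hx (Set.indicator_of_notMem (by exact h) _)
  have hcol : ∀ a k, ‖quatMatrix n x a (k, 0)‖ ^ 2 ≤ 1 := by
    intro a k
    have h := (Complex.le_def.1 (hpos.posSemidef.diag_nonneg (i := (k, (0 : Fin 2))))).1
    simp only [Matrix.sub_apply, one_apply_eq, Matrix.mul_apply, conjTranspose_apply,
      Complex.star_def, Complex.conj_mul', Complex.sub_re, Complex.one_re, Complex.zero_re,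
      Complex.re_sum, ← Complex.ofReal_pow, Complex.ofReal_re] at h
    have := Finset.single_le_sum (f := fun a => ‖quatMatrix n x a (k, 0)‖ ^ 2)
      (fun _ _ => sq_nonneg _) (Finset.mem_univ a)
    linarith
  rw [mem_closedBall_zero_iff, pi_norm_le_iff_of_nonneg zero_le_one]
  intro i
  rw [pi_norm_le_iff_of_nonneg zero_le_one]
  intro k
  have h0 := hcol (i, 0) k
  have h1 := hcol (i, 1) k
  simp only [quatMatrix, Matrix.of_apply, if_true, one_ne_zero, if_false, norm_neg,
    RCLike.norm_conj] at h0 h1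
  exact max_le ((sq_le_one_iff₀ (norm_nonneg _)).1 h0) ((sq_le_one_iff₀ (norm_nonneg _)).1 h1)

lemma integrable_quatAntiSphericalWeight_smul {E : Type*} [NormedAddCommGroup E] [NormedSpace ℝ E]
    (hβ₁ : 0 ≤ β₁) (hβ₂ : 0 ≤ β₂) {f : (Fin n → Fin n → ℂ × ℂ) → E} (hf : Continuous f) :
    Integrable fun x => quatAntiSphericalWeight n β₁ β₂ x • f x := by
  have hc : Continuous (quatMatrix n) := continuous_quatBlock
  have hsupp : Function.support (fun x => quatAntiSphericalWeight n β₁ β₂ x • f x) ⊆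
      Metric.closedBall 0 1 := fun x hx =>
    mem_closedBall_of_quatAntiSphericalWeight_ne_zero (β₁ := β₁) (β₂ := β₂) fun h =>
      hx (by simp [h])
  rw [← integrableOn_iff_integrable_of_support_subset hsupp]
  have hg : Continuous fun x => |((quatMatrix n x)ᴴ * quatMatrix n x).det.re| ^ β₁ *
      |(1 - (quatMatrix n x)ᴴ * quatMatrix n x).det.re| ^ β₂ * ‖f x‖ := by
    refine ((Continuous.rpow_const (by fun_prop) fun _ => Or.inr hβ₁).mul
      (Continuous.rpow_const (by fun_prop) fun _ => Or.inr hβ₂)).mul hf.norm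
  refine Integrable.mono' (hg.continuousOn.integrableOn_compact (isCompact_closedBall 0 1))
    ((measurable_quatAntiSphericalWeight n β₁ β₂).aestronglyMeasurable.smul
      hf.aestronglyMeasurable) (Filter.Eventually.of_forall fun x => ?_)
  rw [norm_smul]
  refine mul_le_mul_of_nonneg_right ?_ (norm_nonneg _)
  refine (norm_indicator_le_norm_self _ _).trans ?_
  rw [norm_mul]
  exact mul_le_mul (Real.abs_rpow_le_abs_rpow _ _) (Real.abs_rpow_le_abs_rpow _ _)
    (norm_nonneg _) (by positivity)

open scoped Matrix.Norms.L2Operator MatrixOrder in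
lemma eventually_posDef_one_sub_gram :
    ∀ᶠ x : Fin n → Fin n → ℂ × ℂ in nhds 0, (1 - (quatMatrix n x)ᴴ * quatMatrix n x).PosDef := by
  have hc : Continuous (quatMatrix n) := continuous_quatBlock
  have h0 : quatMatrix n 0 = 0 := by
    ext a b
    simp [quatMatrix]
  have hcont : Continuous fun x : Fin n → Fin n → ℂ × ℂ =>
      ‖(quatMatrix n x)ᴴ * quatMatrix n x‖ := by fun_prop
  have hlt : ∀ᶠ x : Fin n → Fin n → ℂ × ℂ in nhds 0, ‖(quatMatrix n x)ᴴ * quatMatrix n x‖ < 1 :=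
    hcont.continuousAt.eventually (gt_mem_nhds (by simp [h0]))
  filter_upwards [hlt] with x hx
  have h1 := (IsSelfAdjoint.star_mul_self (quatMatrix n x)).le_algebraMap_norm_self
  rw [Matrix.le_iff] at h1
  have h2 := (PosDef.one (n := Fin n × Fin 2) (R := ℂ)).smul
    (Complex.zero_lt_real.2 (sub_pos.2 hx))
  convert! h2.add_posSemidef h1 using 1
  rw [Algebra.algebraMap_eq_smul_one, star_eq_conjTranspose, Complex.ofReal_sub, sub_smul]
  simp

lemma integral_quatAntiSphericalWeight_pos (hβ₁ : 0 ≤ β₁) (hβ₂ : 0 ≤ β₂) :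
    0 < ∫ x, quatAntiSphericalWeight n β₁ β₂ x := by
  have hc : Continuous (quatMatrix n) := continuous_quatBlock
  have hW : Integrable (quatAntiSphericalWeight n β₁ β₂) := by
    simpa using integrable_quatAntiSphericalWeight_smul hβ₁ hβ₂
      (continuous_const (y := (1 : ℝ)) (X := Fin n → Fin n → ℂ × ℂ))
  rw [integral_pos_iff_support_of_nonneg (fun x => quatAntiSphericalWeight_nonneg x) hW]
  obtain ⟨U, hU, hUo, h0U⟩ := eventually_nhds_iff.1 (eventually_posDef_one_sub_gram (n := n))
  have hVo : IsOpen (U ∩ {x | (quatMatrix n x).det ≠ 0}) :=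
    hUo.inter (isOpen_ne_fun (by fun_prop) continuous_const)
  refine (hVo.measure_pos volume ?_).trans_le (measure_mono ?_)
  · let p : ℝ → Fin n → Fin n → ℂ × ℂ := fun t i k => if i = k then ((t : ℂ), 0) else 0
    have hp : ∀ t, quatMatrix n (p t) = (t : ℂ) • 1 := by
      intro t
      ext ⟨i, e⟩ ⟨k, f⟩
      rcases eq_or_ne i k with rfl | h
      · fin_cases e <;> fin_cases f <;> simp [quatMatrix, p]
      · simp [quatMatrix, p, h]
    have hpc : Continuous p := by
      refine continuous_pi fun i => continuous_pi fun k => ?_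
      simp only [p]
      split_ifs <;> fun_prop
    have hp0 : p 0 = 0 := by
      ext1 i
      ext1 k
      simp [p]
    have hev : ∀ᶠ t in nhdsWithin (0 : ℝ) {0}ᶜ, p t ∈ U :=
      (hpc.continuousAt.eventually (hUo.mem_nhds (by rwa [hp0]))).filter_mono nhdsWithin_le_nhds
    obtain ⟨t, htU, ht⟩ := (hev.and self_mem_nhdsWithin).exists
    refine ⟨p t, htU, ?_⟩
    rw [Set.mem_ofPred_eq, hp, det_smul, det_one, mul_one]
    exact pow_ne_zero _ (Complex.ofReal_ne_zero.2 ht)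
  · rintro x ⟨hxU, hx⟩
    have hx := hU x hxU
    have h1 := (Complex.lt_def.1 hx.det_pos).1
    have h2 : 0 < ((quatMatrix n x)ᴴ * quatMatrix n x).det.re := by
      refine (Complex.lt_def.1 (lt_of_le_of_ne
        (posSemidef_conjTranspose_mul_self (quatMatrix n x)).det_nonneg (Ne.symm ?_))).1
      rw [det_mul, det_conjTranspose]
      exact mul_ne_zero (star_ne_zero.2 ‹_›) ‹_›
    refine ne_of_eq_of_ne (Set.indicator_of_mem (by exact hx) _) ?_
    exact (mul_pos (Real.rpow_pos_of_pos h2 _) (Real.rpow_pos_of_pos h1 _)).ne'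

lemma rowMoment_eq_ofReal_integral (hβ₁ : 0 ≤ β₁) (hβ₂ : 0 ≤ β₂) (S : Finset (Fin n)) :
    rowMoment β₁ β₂ S =
      ENNReal.ofReal (∫ x, quatAntiSphericalWeight n β₁ β₂ x * rowVol S x) :=
  (ofReal_integral_eq_lintegral_ofReal
    (integrable_quatAntiSphericalWeight_smul hβ₁ hβ₂ (continuous_rowVol S))
    (Filter.Eventually.of_forall fun x =>
      mul_nonneg (quatAntiSphericalWeight_nonneg x) (rowVol_nonneg S x))).symm

lemma sum_integral_rowVol (hβ₁ : 0 ≤ β₁) (hβ₂ : 0 ≤ β₂) (hn : 0 < n) {j : ℕ} (hj : j ≤ n) :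
    ∑ S ∈ Finset.powersetCard j (Finset.univ : Finset (Fin n)),
        ∫ x, quatAntiSphericalWeight n β₁ β₂ x * rowVol S x =
      n.choose j * (∏ i ∈ Finset.range j,
        (β₁ + n + 1 - (i + 1)) / (β₁ + β₂ + 2 * n + 1 / 2 - (i + 1))) *
          ∫ x, quatAntiSphericalWeight n β₁ β₂ x := by
  have : NeZero n := ⟨hn.ne'⟩
  induction j with
  | zero =>
    have h1 : ∀ x : Fin n → Fin n → ℂ × ℂ, rowVol ∅ x = 1 := fun x => by
      simp [rowVol, quatVol]
    simp [h1]
  | succ j ih =>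
    have ih := ih (by omega)
    have h := sum_rowMoment_succ hβ₁ hβ₂ j hj
    have hI : ∀ S : Finset (Fin n), 0 ≤ ∫ x, quatAntiSphericalWeight n β₁ β₂ x * rowVol S x :=
      fun S => integral_nonneg fun x =>
        mul_nonneg (quatAntiSphericalWeight_nonneg x) (rowVol_nonneg S x)
    have hjn : (j : ℝ) + 1 ≤ n := by exact_mod_cast hj
    have hd : 0 < 2 * β₂ + 2 * n + 2 * β₁ + 1 + 2 * (n - (j + 1)) := by linarith
    have hj0 : (0 : ℝ) ≤ j + 1 := by positivity
    have hnum : (0 : ℝ) ≤ 2 * (n - j) + 2 * β₁ := by linarith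
    have hc1 : ((j : ENNReal) + 1) = ENNReal.ofReal (j + 1) := by
      rw [ENNReal.ofReal_add (by positivity) zero_le_one]
      simp
    have hc2 : ((n - j : ℕ) : ENNReal) = ENNReal.ofReal (n - j) := by
      rw [← Nat.cast_sub (by omega), ENNReal.ofReal_natCast]
    simp only [rowMoment_eq_ofReal_integral hβ₁ hβ₂] at h
    rw [← ENNReal.ofReal_sum_of_nonneg fun S _ => hI S,
      ← ENNReal.ofReal_sum_of_nonneg fun S _ => hI S, hc1, hc2, ← ENNReal.ofReal_mul hj0,
      ← ENNReal.ofReal_mul (mul_nonneg hj0 hd.le), ← ENNReal.ofReal_mul (by linarith),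
      ← ENNReal.ofReal_mul (mul_nonneg (by linarith) hnum), ENNReal.ofReal_eq_ofReal_iff
        (mul_nonneg (mul_nonneg hj0 hd.le) (Finset.sum_nonneg fun S _ => hI S))
        (mul_nonneg (mul_nonneg (by linarith) hnum) (Finset.sum_nonneg fun S _ => hI S)), ih] at h
    have hch : (n.choose (j + 1) : ℝ) * (j + 1) = n.choose j * (n - j) := by
      rw [← Nat.cast_sub (by omega)]
      exact_mod_cast Nat.choose_succ_right_eq n j
    rw [Finset.prod_range_succ]
    have hd' : β₁ + β₂ + 2 * n + 1 / 2 - (j + 1) ≠ 0 := by linarith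
    have hj1 : (j : ℝ) + 1 ≠ 0 := by positivity
    refine mul_left_cancel₀ (mul_ne_zero hj1 hd.ne') (h.trans ?_)
    have hdd : 2 * β₂ + 2 * n + 2 * β₁ + 1 + 2 * (n - (j + 1)) =
        2 * (β₁ + β₂ + 2 * n + 1 / 2 - (j + 1)) := by ring
    rw [hdd]
    generalize ∏ i ∈ Finset.range j,
      (β₁ + n + 1 - (i + 1)) / (β₁ + β₂ + 2 * n + 1 / 2 - (i + 1)) = p
    generalize β₁ + β₂ + 2 * n + 1 / 2 - (j + 1) = d at hd'
    generalize ∫ x, quatAntiSphericalWeight n β₁ β₂ x = I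
    have : d * ((β₁ + n + 1 - (j + 1)) / d) = β₁ + n - j := by
      rw [mul_div_cancel₀ _ hd']
      ring
    linear_combination (-2 * p * I * (β₁ + n - j)) * hch -
      (2 * (j + 1) * n.choose (j + 1) * p * I) * this

end Integrability

section Symmetry

variable {n : ℕ} {β₁ β₂ : ℝ}

lemma integral_quatAntiSphericalWeight_smul_comp {E : Type*} [NormedAddCommGroup E]
    [NormedSpace ℝ E] {φ : (Fin n → Fin n → ℂ × ℂ) → Fin n → Fin n → ℂ × ℂ}
    (hφ : MeasurePreserving φ)
    (hW : ∀ x, quatAntiSphericalWeight n β₁ β₂ (φ x) = quatAntiSphericalWeight n β₁ β₂ x)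
    {f : (Fin n → Fin n → ℂ × ℂ) → E} (hf : Continuous f) :
    ∫ x, quatAntiSphericalWeight n β₁ β₂ x • f (φ x) =
      ∫ x, quatAntiSphericalWeight n β₁ β₂ x • f x := by
  have hm : AEStronglyMeasurable (fun x => quatAntiSphericalWeight n β₁ β₂ x • f x)
      (Measure.map φ volume) :=
    (measurable_quatAntiSphericalWeight n β₁ β₂).aestronglyMeasurable.smul hf.aestronglyMeasurable
  conv_rhs => rw [← hφ.map_eq, integral_map hφ.aemeasurable hm]
  simp only [hW]

lemma quatAntiSphericalWeight_congr {x y : Fin n → Fin n → ℂ × ℂ}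
    (hpos : (1 - (quatMatrix n x)ᴴ * quatMatrix n x).PosDef ↔
      (1 - (quatMatrix n y)ᴴ * quatMatrix n y).PosDef)
    (hgram : ((quatMatrix n x)ᴴ * quatMatrix n x).det = ((quatMatrix n y)ᴴ * quatMatrix n y).det)
    (hsub : (1 - (quatMatrix n x)ᴴ * quatMatrix n x).det =
      (1 - (quatMatrix n y)ᴴ * quatMatrix n y).det) :
    quatAntiSphericalWeight n β₁ β₂ x = quatAntiSphericalWeight n β₁ β₂ y := by
  unfold quatAntiSphericalWeight
  by_cases h : (1 - (quatMatrix n x)ᴴ * quatMatrix n x).PosDef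
  · rw [Set.indicator_of_mem (by exact h), Set.indicator_of_mem (by exact hpos.1 h), hgram, hsub]
  · rw [Set.indicator_of_notMem (by exact h),
      Set.indicator_of_notMem (by exact fun h' => h (hpos.2 h'))]

lemma quatAntiSphericalWeight_permute_columns (σ : Equiv.Perm (Fin n))
    (x : Fin n → Fin n → ℂ × ℂ) :
    quatAntiSphericalWeight n β₁ β₂ (fun i k => x i (σ k)) =
      quatAntiSphericalWeight n β₁ β₂ x := by
  let e : Fin n × Fin 2 ≃ Fin n × Fin 2 := Equiv.prodCongr σ (Equiv.refl _)
  have hG : quatMatrix n (fun i k => x i (σ k)) = (quatMatrix n x).submatrix id e := rfl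
  have hgram : (quatMatrix n fun i k => x i (σ k))ᴴ * quatMatrix n (fun i k => x i (σ k)) =
      ((quatMatrix n x)ᴴ * quatMatrix n x).submatrix e e := by
    rw [hG, conjTranspose_submatrix, ← submatrix_mul _ _ e id e Function.bijective_id]
  have hsub : 1 - ((quatMatrix n x)ᴴ * quatMatrix n x).submatrix e e =
      (1 - (quatMatrix n x)ᴴ * quatMatrix n x).submatrix e e := by
    ext a b
    simp [Matrix.one_apply]
  apply quatAntiSphericalWeight_congr <;> rw [hgram]
  · rw [hsub]
    exact ⟨fun h => by simpa using h.submatrix e.symm.injective, fun h => h.submatrix e.injective⟩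
  · rw [det_submatrix_equiv_self]
  · rw [hsub, det_submatrix_equiv_self]

lemma measurePreserving_permute_columns (σ : Equiv.Perm (Fin n)) :
    MeasurePreserving fun (x : Fin n → Fin n → ℂ × ℂ) i k => x i (σ k) := by
  refine volume_preserving_pi (f := fun _ (y : Fin n → ℂ × ℂ) k => y (σ k)) fun _ => ?_
  convert! volume_measurePreserving_piCongrLeft (fun _ : Fin n => ℂ × ℂ) σ.symm using 1
  ext1 y
  ext1 k
  have := Equiv.piCongrLeft_apply_apply (fun _ : Fin n => ℂ × ℂ) σ.symm y (σ k)
  rw [Equiv.symm_apply_apply] at this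
  exact this.symm

lemma choose_mul_integral_quatVol (hβ₁ : 0 ≤ β₁) (hβ₂ : 0 ≤ β₂) (S : Finset (Fin n)) :
    n.choose S.card * ∫ x, quatAntiSphericalWeight n β₁ β₂ x *
        quatVol (fun i k : S => x i k) =
      ∫ x, quatAntiSphericalWeight n β₁ β₂ x * rowVol S x := by
  have hcont : ∀ T : Finset (Fin n), Continuous fun x : Fin n → Fin n → ℂ × ℂ =>
      quatVol fun (i : S) (k : T) => x i k := fun T =>
    continuous_quatVol.comp (by fun_prop)
  have hT : ∀ T : Finset (Fin n), T.card = S.card →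
      ∫ x, quatAntiSphericalWeight n β₁ β₂ x * quatVol (fun (i : S) (k : T) => x i k) =
      ∫ x, quatAntiSphericalWeight n β₁ β₂ x * quatVol (fun i k : S => x i k) := by
    intro T hTS
    let e : S ≃ T := Finset.equivOfCardEq hTS.symm
    refine Eq.trans ?_ (integral_quatAntiSphericalWeight_smul_comp
      (measurePreserving_permute_columns e.extendSubtype)
      (quatAntiSphericalWeight_permute_columns _) (hcont S))
    refine integral_congr_ae (Filter.Eventually.of_forall fun x => ?_)
    have h := quatVol_submatrix_equiv (Equiv.refl S) e fun (i : S) (k : T) => x i k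
    simp only [smul_eq_mul]
    rw [← h]
    congr 2
    ext1 i
    ext1 k
    rw [Equiv.extendSubtype_apply_of_mem e k k.2]
    rfl
  have hsum : ∀ x : Fin n → Fin n → ℂ × ℂ,
      ∑ T ∈ Finset.powersetCard S.card (Finset.univ : Finset (Fin n)),
        quatVol (fun (i : S) (k : T) => x i k) = rowVol S x := by
    intro x
    have h := sum_powersetCard_quatVol (fun i : S => x i) (by
      rw [Fintype.card_coe]; exact Finset.card_le_univ S)
    rwa [Fintype.card_coe] at h
  simp only [← hsum, ← smul_eq_mul (a := quatAntiSphericalWeight n β₁ β₂ _)] at hT ⊢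
  simp only [Finset.smul_sum]
  rw [integral_finsetSum _ fun T _ => integrable_quatAntiSphericalWeight_smul hβ₁ hβ₂ (hcont T),
    Finset.sum_congr rfl fun T h => hT T (Finset.mem_powersetCard.1 h).2]
  simp

/-- Left multiplication of the quaternion row `t` by the imaginary unit `diag (i, -i)`. -/
noncomputable def rotateRow (t : Fin n) (x : Fin n → Fin n → ℂ × ℂ) : Fin n → Fin n → ℂ × ℂ :=
  fun i => if i = t then fun k => (Complex.I * (x i k).1, Complex.I * (x i k).2) else x i

/-- The diagonal entries of the matrix implementing `rotateRow`. -/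
noncomputable def rotateDiag (t : Fin n) (a : Fin n × Fin 2) : ℂ :=
  if a.1 = t then (if a.2 = 0 then Complex.I else -Complex.I) else 1

lemma quatMatrix_rotateRow (t : Fin n) (x : Fin n → Fin n → ℂ × ℂ) (a b : Fin n × Fin 2) :
    quatMatrix n (rotateRow t x) a b = rotateDiag t a * quatMatrix n x a b := by
  obtain ⟨i, e⟩ := a
  obtain ⟨k, f⟩ := b
  rcases eq_or_ne i t with rfl | h
  · fin_cases e <;> fin_cases f <;> simp [quatMatrix, rotateRow, rotateDiag]
  · simp [quatMatrix, rotateRow, rotateDiag, h]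

lemma quatAntiSphericalWeight_rotateRow (t : Fin n) (x : Fin n → Fin n → ℂ × ℂ) :
    quatAntiSphericalWeight n β₁ β₂ (rotateRow t x) = quatAntiSphericalWeight n β₁ β₂ x := by
  have hgram : (quatMatrix n (rotateRow t x))ᴴ * quatMatrix n (rotateRow t x) =
      (quatMatrix n x)ᴴ * quatMatrix n x := by
    ext a b
    simp only [Matrix.mul_apply, conjTranspose_apply, quatMatrix_rotateRow]
    refine Finset.sum_congr rfl fun c _ => ?_
    have : star (rotateDiag t c) * rotateDiag t c = 1 := by
      unfold rotateDiag
      split_ifs <;> simp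
    rw [star_mul]
    linear_combination star (quatMatrix n x c a) * quatMatrix n x c b * this
  apply quatAntiSphericalWeight_congr <;> rw [hgram]

lemma measurePreserving_rotateRow (t : Fin n) : MeasurePreserving (rotateRow t) := by
  refine volume_preserving_pi (f := fun i (y : Fin n → ℂ × ℂ) =>
    if i = t then fun k => (Complex.I * (y k).1, Complex.I * (y k).2) else y) fun i => ?_
  have hI : MeasurePreserving fun w : ℂ => Complex.I * w :=
    (rotation ⟨Complex.I, by simp [Submonoid.unitSphere]⟩).measurePreserving
  by_cases h : i = t
  · simp only [h, if_true]
    exact volume_preserving_pi fun _ => hI.prod hI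
  · simp only [h, if_false]
    exact MeasurePreserving.id _

end Symmetry

section Expansion

variable {n : ℕ} {β₁ β₂ : ℝ}

/-- The matrix whose rows in `U` are those of `-G` and whose other rows are those of `z I`. -/
noncomputable def mixedRows (z : ℂ) (U : Finset (Fin n × Fin 2)) (x : Fin n → Fin n → ℂ × ℂ) :
    Matrix (Fin n × Fin 2) (Fin n × Fin 2) ℂ :=
  Matrix.of fun a b => if a ∈ U then -quatMatrix n x a b
    else (z • (1 : Matrix (Fin n × Fin 2) (Fin n × Fin 2) ℂ)) a b

lemma det_smul_one_sub_quatMatrix (z : ℂ) (x : Fin n → Fin n → ℂ × ℂ) :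
    (z • (1 : Matrix (Fin n × Fin 2) (Fin n × Fin 2) ℂ) - quatMatrix n x).det =
      ∑ U, (mixedRows z U x).det := by
  rw [sub_eq_neg_add]
  refine ((detRowAlternating (R := ℂ)).toMultilinearMap.map_add_univ (-quatMatrix n x)
    (z • (1 : Matrix (Fin n × Fin 2) (Fin n × Fin 2) ℂ))).trans
      (Finset.sum_congr rfl fun U _ => congrArg Matrix.det ?_)
  ext a b
  by_cases h : a ∈ U
  · refine (congrFun (Finset.piecewise_eq_of_mem U _ _ h) b).trans ?_
    simp [mixedRows, h]
  · refine (congrFun (Finset.piecewise_eq_of_notMem U _ _ h) b).trans ?_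
    simp [mixedRows, h]

lemma continuous_mixedRows (z : ℂ) (U : Finset (Fin n × Fin 2)) :
    Continuous (mixedRows z U) := by
  have hc : Continuous (quatMatrix n) := continuous_quatBlock
  refine continuous_matrix fun a b => ?_
  simp only [mixedRows, Matrix.of_apply]
  split_ifs
  · exact (hc.matrix_elem a b).neg
  · exact continuous_const

lemma integral_det_mixedRows_eq_zero (z : ℂ) {U : Finset (Fin n × Fin 2)} {t : Fin n}
    (ht : ¬ ((t, 0) ∈ U ↔ (t, 1) ∈ U)) :
    ∫ x, quatAntiSphericalWeight n β₁ β₂ x • (mixedRows z U x).det = 0 := by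
  set c : ℂ := ∏ a, if a ∈ U then rotateDiag t a else 1 with hc
  have hc1 : c ≠ 1 := by
    rw [hc, Fintype.prod_prod_type, Fintype.prod_eq_single t fun i hi => by
      simp [rotateDiag, hi], Fin.prod_univ_two]
    by_cases h0 : (t, (0 : Fin 2)) ∈ U <;> by_cases h1 : (t, (1 : Fin 2)) ∈ U <;>
      simp [rotateDiag, h0, h1, Complex.ext_iff] at ht ⊢
  have hdet : ∀ x, (mixedRows z U (rotateRow t x)).det = c * (mixedRows z U x).det := by
    intro x
    rw [hc, ← det_mul_column]
    congr 1
    ext a b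
    by_cases h : a ∈ U <;> simp [mixedRows, h, quatMatrix_rotateRow]
  have h := integral_quatAntiSphericalWeight_smul_comp (β₁ := β₁) (β₂ := β₂)
    (measurePreserving_rotateRow t) (quatAntiSphericalWeight_rotateRow t)
    (continuous_mixedRows z U).matrix_det
  simp only [hdet, ← mul_smul_comm] at h
  rw [integral_const_mul] at h
  by_contra h0
  exact hc1 (mul_right_cancel₀ h0 (h.trans (one_mul _).symm))

lemma det_mixedRows_product (z : ℂ) (S : Finset (Fin n)) (x : Fin n → Fin n → ℂ × ℂ) :
    (mixedRows z (S ×ˢ Finset.univ) x).det =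
      z ^ (2 * (n - S.card)) * quatVol (fun i k : S => x i k) := by
  rw [twoBlockTriangular_det _ (fun a : Fin n × Fin 2 => a.1 ∈ S), mul_comm, quatVol_square]
  · congr 1
    · have : (mixedRows z (S ×ˢ Finset.univ) x).toSquareBlockProp (fun a => ¬ a.1 ∈ S) =
          z • 1 := by
        ext ⟨a, ha⟩ ⟨b, hb⟩
        simp [mixedRows, toSquareBlockProp, ha, Matrix.one_apply, Subtype.ext_iff]
      rw [this, det_smul, det_one, mul_one]
      congr 1
      rw [Fintype.card_congr (Equiv.prodSubtypeFstEquivSubtypeProd (p := fun i => ¬ i ∈ S)),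
        Fintype.card_prod, Fintype.card_fin, Fintype.card_subtype_compl, Fintype.card_fin,
        Fintype.card_coe, mul_comm]
    · have : (mixedRows z (S ×ˢ Finset.univ) x).toSquareBlockProp (fun a => a.1 ∈ S) =
          (-quatBlock (fun i k : S => x i k)).submatrix
            (Equiv.prodSubtypeFstEquivSubtypeProd (p := fun i => i ∈ S))
            (Equiv.prodSubtypeFstEquivSubtypeProd (p := fun i => i ∈ S)) := by
        ext ⟨a, ha⟩ ⟨b, hb⟩
        simp [mixedRows, toSquareBlockProp, ha, quatMatrix, quatBlock]
        rfl
      rw [this, det_submatrix_equiv_self, det_neg, Fintype.card_prod, Fintype.card_fin,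
        mul_comm _ 2, pow_mul]
      simp
  · intro a ha b hb
    have hab : a ≠ b := fun h => ha (h ▸ hb)
    simp [mixedRows, ha, hab]

lemma integral_mul_det (hβ₁ : 0 ≤ β₁) (hβ₂ : 0 ≤ β₂) (z : ℂ) :
    ∫ x, (quatAntiSphericalWeight n β₁ β₂ x : ℂ) *
        (z • (1 : Matrix (Fin n × Fin 2) (Fin n × Fin 2) ℂ) - quatMatrix n x).det =
      ∑ S : Finset (Fin n), z ^ (2 * (n - S.card)) *
        ((∫ x, quatAntiSphericalWeight n β₁ β₂ x * quatVol (fun i k : S => x i k) : ℝ) : ℂ) := by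
  simp only [← Complex.real_smul, det_smul_one_sub_quatMatrix, Finset.smul_sum]
  rw [integral_finsetSum _ fun U _ => integrable_quatAntiSphericalWeight_smul hβ₁ hβ₂
    (continuous_mixedRows z U).matrix_det]
  have hinj : Function.Injective fun S : Finset (Fin n) => S ×ˢ (Finset.univ : Finset (Fin 2)) := by
    intro S T h
    ext i
    simpa using Finset.ext_iff.1 h (i, 0)
  rw [← Finset.sum_subset (Finset.subset_univ (Finset.univ.image
    fun S : Finset (Fin n) => S ×ˢ (Finset.univ : Finset (Fin 2)))), Finset.sum_image hinj.injOn]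
  · refine Finset.sum_congr rfl fun S _ => ?_
    simp only [det_mixedRows_product, ← mul_smul_comm]
    rw [integral_const_mul, ← integral_complex_ofReal]
    simp
  · intro U _ hU
    by_cases h : ∀ t, (t, 0) ∈ U ↔ (t, 1) ∈ U
    · refine (hU (Finset.mem_image.2 ⟨Finset.univ.filter fun t => (t, 0) ∈ U,
      Finset.mem_univ _, ?_⟩)).elim
      ext ⟨t, e⟩
      fin_cases e <;> simp [h]
    · obtain ⟨t, ht⟩ := not_forall.1 h
      exact integral_det_mixedRows_eq_zero z ht

end Expansion

/-- The even-degree skew orthogonal polynomial for the quaternion real anti-spherical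
ensemble: `⟨det (z I - G)⟩ = ∑_{j=0}^{n} z^{2(n-j)} ∏_{i=1}^{j}
(β₁ + n + 1 - i)/(β₁ + β₂ + 2n + 1/2 - i)`. -/
theorem quatAntiSpherical_even_skew_orthogonal_poly (n : ℕ) (hn : 0 < n)
    (β₁ β₂ : ℝ) (hβ₁ : 0 ≤ β₁) (hβ₂ : 0 ≤ β₂) (z : ℂ) :
    (∫ x : Fin n → Fin n → ℂ × ℂ,
        (quatAntiSphericalWeight n β₁ β₂ x : ℂ) *
          (z • (1 : Matrix (Fin n × Fin 2) (Fin n × Fin 2) ℂ) - quatMatrix n x).det) /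
      ((∫ x : Fin n → Fin n → ℂ × ℂ, quatAntiSphericalWeight n β₁ β₂ x : ℝ) : ℂ)
      = ∑ j ∈ Finset.range (n + 1), z ^ (2 * (n - j)) *
          ∏ i ∈ Finset.range j,
            (((β₁ + n + 1 - (i + 1)) / (β₁ + β₂ + 2 * n + 1 / 2 - (i + 1)) : ℝ) : ℂ) := by
  have hZ : ((∫ x, quatAntiSphericalWeight n β₁ β₂ x : ℝ) : ℂ) ≠ 0 :=
    Complex.ofReal_ne_zero.2 (integral_quatAntiSphericalWeight_pos hβ₁ hβ₂).ne'
  rw [div_eq_iff hZ, integral_mul_det hβ₁ hβ₂, ← Finset.powerset_univ, Finset.sum_powerset,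
    Finset.card_univ, Fintype.card_fin, Finset.sum_mul]
  refine Finset.sum_congr rfl fun j hj => ?_
  have hjn : j ≤ n := Finset.mem_range_succ_iff.1 hj
  have hch : (n.choose j : ℝ) ≠ 0 := Nat.cast_ne_zero.2 (Nat.choose_pos hjn).ne'
  have hsum : ∑ S ∈ Finset.powersetCard j (Finset.univ : Finset (Fin n)),
      ∫ x, quatAntiSphericalWeight n β₁ β₂ x * quatVol (fun i k : S => x i k) =
      (∏ i ∈ Finset.range j, (β₁ + n + 1 - (i + 1)) / (β₁ + β₂ + 2 * n + 1 / 2 - (i + 1))) *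
        ∫ x, quatAntiSphericalWeight n β₁ β₂ x := by
    refine mul_left_cancel₀ hch ?_
    rw [← mul_assoc, ← sum_integral_rowVol hβ₁ hβ₂ hn hjn, Finset.mul_sum]
    refine Finset.sum_congr rfl fun S hS => ?_
    rw [← choose_mul_integral_quatVol hβ₁ hβ₂ S, (Finset.mem_powersetCard.1 hS).2]
  rw [← Complex.ofReal_prod, mul_assoc, ← Complex.ofReal_mul, ← hsum, Complex.ofReal_sum,
    Finset.mul_sum]
  refine Finset.sum_congr rfl fun S hS => ?_
  rw [(Finset.mem_powersetCard.1 hS).2]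
end

section
/- Let n be a positive integer and let β₁, β₂ be real parameters with β₁ ≥ 0 and β₂ ≥ 0. For G drawn from the quaternion real anti-spherical ensemble of size 2n with parameters (β₁, β₂), and for every complex number z, z·⟨det(z·I − G)⟩ + ⟨det(z·I − G)·Tr(G)⟩ = z^{2n+1}; that is, the odd-degree skew orthogonal polynomial for the quaternion real anti-spherical ensemble is the monomial Q_{2n+1}(z) = z^{2n+1}. -/
open MeasureTheory Matrix
open scoped ComplexOrder

namespace QuatAntiSpherical

section Algebra

variable {ι : Type*} [Fintype ι] [DecidableEq ι]

/-- The matrix whose rows in `S` are those of `-G` and whose other rows are those of `z I`. -/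
def rowPattern (z : ℂ) (S : Finset ι) (G : Matrix ι ι ℂ) : Matrix ι ι ℂ :=
  Matrix.of fun v w => if v ∈ S then -G v w else if v = w then z else 0

/-- `rowPattern z S G` with row `u` replaced by the projection of `-G u` to column `c`. -/
def projPattern (z : ℂ) (S : Finset ι) (u c : ι) (G : Matrix ι ι ℂ) : Matrix ι ι ℂ :=
  Matrix.of fun v w => if v = u then (if w = c then -G u c else 0) else rowPattern z S G v w

/-- The rows of `G` permuted by `τ` and then scaled by `s`. -/
def rowAct (s : ι → ℂ) (τ : Equiv.Perm ι) (G : Matrix ι ι ℂ) : Matrix ι ι ℂ :=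
  Matrix.of fun v w => s v * G (τ v) w

theorem det_sub_eq_sum_rowPattern (z : ℂ) (G : Matrix ι ι ℂ) :
    (z • (1 : Matrix ι ι ℂ) - G).det = ∑ S : Finset ι, (rowPattern z S G).det := by
  have h := (Matrix.detRowAlternating (n := ι) (R := ℂ)).toMultilinearMap.map_add_univ
    (fun v => -G v) (fun v => (z • (1 : Matrix ι ι ℂ)) v)
  have h2 : (z • (1 : Matrix ι ι ℂ) - G) =
      (fun v => -G v) + (fun v => (z • (1 : Matrix ι ι ℂ)) v) := by
    ext v w
    simp only [Matrix.sub_apply, Pi.add_apply, Pi.neg_apply]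
    ring
  rw [h2]
  refine h.trans (Finset.sum_congr rfl fun S _ => ?_)
  change Matrix.det _ = Matrix.det _
  congr 1
  ext v w
  by_cases hv : v ∈ S <;> simp [rowPattern, hv, Matrix.one_apply]

theorem det_rowPattern_empty (z : ℂ) (G : Matrix ι ι ℂ) :
    (rowPattern z ∅ G).det = z ^ Fintype.card ι := by
  have : rowPattern z ∅ G = Matrix.diagonal fun _ => z := by
    ext v w
    simp [rowPattern, Matrix.diagonal_apply]
  simp [this]

theorem det_rowPattern_rowAct (z : ℂ) (S : Finset ι) (s : ι → ℂ) (G : Matrix ι ι ℂ) :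
    (rowPattern z S (rowAct s 1 G)).det = (∏ v ∈ S, s v) * (rowPattern z S G).det := by
  have : rowPattern z S (rowAct s 1 G) =
      Matrix.of fun v w => (if v ∈ S then s v else 1) * rowPattern z S G v w := by
    ext v w
    by_cases hv : v ∈ S <;> simp [rowPattern, rowAct, hv]
  rw [this, Matrix.det_mul_column]
  simp

theorem det_projPattern_rowAct (z : ℂ) {S : Finset ι} {u : ι} (hu : u ∈ S) (c : ι) (s : ι → ℂ)
    (G : Matrix ι ι ℂ) :
    (projPattern z S u c (rowAct s 1 G)).det =
      (∏ v ∈ S, s v) * (projPattern z S u c G).det := by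
  have : projPattern z S u c (rowAct s 1 G) =
      Matrix.of fun v w => (if v ∈ S then s v else 1) * projPattern z S u c G v w := by
    ext v w
    by_cases hvu : v = u
    · subst hvu
      by_cases hw : w = c <;> simp [projPattern, rowAct, hu, hw]
    · by_cases hv : v ∈ S <;> simp [projPattern, rowPattern, rowAct, hv, hvu]
  rw [this, Matrix.det_mul_column]
  simp

theorem det_projPattern_rowAct_perm (z : ℂ) (S : Finset ι) (u c : ι) (s : ι → ℂ)
    (τ : Equiv.Perm ι) (hu : τ u ∈ S) (hτ : ∀ v, v ∉ S → τ v = v) (hs : ∀ v, v ∉ S → s v = 1)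
    (hsign : (∏ v, s v) * ((Equiv.Perm.sign τ : ℤ) : ℂ) = 1) (G : Matrix ι ι ℂ) :
    (projPattern z S u c (rowAct s τ G)).det = (projPattern z S (τ u) c G).det := by
  have hmem : ∀ v, v ∈ S → τ v ∈ S := by
    intro v hv
    by_contra h
    exact h ((τ.injective (hτ _ h)).symm ▸ hv)
  have huS : u ∈ S := by
    by_contra h
    exact h (hτ u h ▸ hu)
  have : projPattern z S u c (rowAct s τ G) =
      Matrix.of fun v w => s v * (projPattern z S (τ u) c G).submatrix τ id v w := by
    ext v w
    by_cases hvu : v = u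
    · subst hvu
      by_cases hw : w = c <;> simp [projPattern, rowAct, hw]
    · by_cases hv : v ∈ S
      · simp [projPattern, rowPattern, rowAct, hv, hvu, hmem v hv]
      · have h1 := hτ v hv
        have h2 := hs v hv
        simp [projPattern, rowPattern, hv, hvu, h1, h2]
  rw [this, Matrix.det_mul_column, Matrix.det_permute, ← mul_assoc, hsign, one_mul]

theorem det_projPattern_eq_zero (z : ℂ) {S : Finset ι} {u c : ι} (hu : u ∈ S) (hc : c ∉ S)
    (G : Matrix ι ι ℂ) : (projPattern z S u c G).det = 0 := by
  have huc : c ≠ u := fun h => hc (h ▸ hu)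
  by_cases hz : z = 0
  · refine Matrix.det_eq_zero_of_row_eq_zero c fun w => ?_
    simp [projPattern, rowPattern, hc, huc, hz]
  · have : projPattern z S u c G =
        (projPattern z S u c G).updateRow u ((-G u c / z) • projPattern z S u c G c) := by
      ext v w
      by_cases hv : v = u
      · subst hv
        by_cases hw : w = c
        · simp [projPattern, rowPattern, hc, huc, hw, hz]
        · simp [projPattern, rowPattern, hc, huc, hw, Ne.symm hw]
      · simp [Matrix.updateRow_ne hv]
    rw [this, Matrix.det_updateRow_smul, Matrix.det_zero_of_row_eq huc, mul_zero]
    rw [Matrix.updateRow_self, Matrix.updateRow_ne huc]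

theorem sum_det_projPattern (z : ℂ) {S : Finset ι} {u : ι} (hu : u ∈ S) (G : Matrix ι ι ℂ) :
    ∑ c ∈ S, (projPattern z S u c G).det = (rowPattern z S G).det := by
  have h0 : ∑ c ∈ S, (projPattern z S u c G).det = ∑ c, (projPattern z S u c G).det :=
    Finset.sum_subset (Finset.subset_univ _) fun c _ hc => det_projPattern_eq_zero z hu hc G
  have h1 : ∀ c, projPattern z S u c G =
      (rowPattern z S G).updateRow u (Pi.single c (-G u c)) := by
    intro c
    ext v w
    by_cases hv : v = u
    · subst hv
      simp [projPattern, Pi.single_apply]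
    · simp [projPattern, hv]
  have h2 : rowPattern z S G =
      (rowPattern z S G).updateRow u (∑ c, Pi.single c (-G u c)) := by
    ext v w
    by_cases hv : v = u
    · subst hv
      simp [rowPattern, hu]
    · simp [hv]
  rw [h0]
  conv_rhs => rw [h2]
  simp_rw [h1]
  exact ((Matrix.detRowAlternating (n := ι) (R := ℂ)).map_update_sum Finset.univ u
    (fun c => Pi.single c (-G u c)) (rowPattern z S G)).symm

theorem det_rowPattern_mul_diag (z : ℂ) {S : Finset ι} {c : ι} (hc : c ∉ S) (G : Matrix ι ι ℂ) :
    (rowPattern z S G).det * G c c = -(z * (projPattern z (insert c S) c c G).det) := by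
  have h1 : projPattern z (insert c S) c c G =
      (rowPattern z S G).updateRow c (-G c c • Pi.single c 1) := by
    ext v w
    by_cases hv : v = c
    · subst hv
      by_cases hw : w = v <;> simp [projPattern, hw]
    · simp [projPattern, rowPattern, hv]
  have h2 : rowPattern z S G = (rowPattern z S G).updateRow c (z • Pi.single c 1) := by
    ext v w
    by_cases hv : v = c
    · subst hv
      simp [rowPattern, hc, Pi.single_apply, eq_comm]
    · simp [hv]
  rw [h1, Matrix.det_updateRow_smul]
  conv_lhs => rw [h2, Matrix.det_updateRow_smul]
  ring

@[fun_prop]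
theorem continuous_det_rowPattern (z : ℂ) (S : Finset ι) :
    Continuous fun G : Matrix ι ι ℂ => (rowPattern z S G).det := by
  refine Continuous.matrix_det (continuous_matrix fun v w => ?_)
  by_cases hv : v ∈ S <;> simp only [rowPattern, hv, Matrix.of_apply, if_true, if_false] <;>
    fun_prop

@[fun_prop]
theorem continuous_det_projPattern (z : ℂ) (S : Finset ι) (u c : ι) :
    Continuous fun G : Matrix ι ι ℂ => (projPattern z S u c G).det := by
  refine Continuous.matrix_det (continuous_matrix fun v w => ?_)
  simp only [projPattern, rowPattern, Matrix.of_apply]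
  split_ifs <;> fun_prop

end Algebra

section Ensemble

variable {n : ℕ} {β₁ β₂ : ℝ}

instance isAddHaarMeasure_volume_prod : (volume : Measure (ℂ × ℂ)).IsAddHaarMeasure :=
  inferInstanceAs (volume.prod volume : Measure (ℂ × ℂ)).IsAddHaarMeasure

instance isAddHaarMeasure_volume_row (n : ℕ) :
    (volume : Measure (Fin n → ℂ × ℂ)).IsAddHaarMeasure :=
  Measure.pi.isAddHaarMeasure _

instance isAddHaarMeasure_volume_matrix (n : ℕ) :
    (volume : Measure (Fin n → Fin n → ℂ × ℂ)).IsAddHaarMeasure :=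
  Measure.pi.isAddHaarMeasure _

@[fun_prop]
theorem continuous_quatMatrix : Continuous (quatMatrix n) := by
  refine continuous_matrix fun a b => ?_
  simp only [quatMatrix, Matrix.of_apply]
  split_ifs <;> fun_prop

theorem posDef_one_sub_of_sum_lt_one {ι : Type*} [Fintype ι] [DecidableEq ι] (G : Matrix ι ι ℂ)
    (h : ∑ a, ∑ b, ‖G a b‖ ^ 2 < 1) : (1 - Gᴴ * G).PosDef := by
  refine .of_dotProduct_mulVec_pos
    (Matrix.isHermitian_one.sub (Matrix.isHermitian_conjTranspose_mul_self G)) fun v hv => ?_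
  have hnorm : ∀ w : ι → ℂ, star w ⬝ᵥ w = ((∑ a, ‖w a‖ ^ 2 : ℝ) : ℂ) := by
    intro w
    simp [dotProduct, Complex.conj_mul']
  have h1 : star v ⬝ᵥ ((1 - Gᴴ * G) *ᵥ v) =
      ((∑ a, ‖v a‖ ^ 2 - ∑ a, ‖(G *ᵥ v) a‖ ^ 2 : ℝ) : ℂ) := by
    rw [Matrix.sub_mulVec, dotProduct_sub, Matrix.one_mulVec, ← Matrix.mulVec_mulVec,
      Matrix.dotProduct_mulVec, ← Matrix.star_mulVec, hnorm, hnorm]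
    push_cast
    ring
  have hpos : 0 < ∑ a, ‖v a‖ ^ 2 := by
    obtain ⟨a, ha⟩ := Function.ne_iff.mp hv
    exact Finset.sum_pos' (fun _ _ => by positivity)
      ⟨a, Finset.mem_univ _, pow_pos (norm_pos_iff.mpr ha) 2⟩
  have hle : ∑ a, ‖(G *ᵥ v) a‖ ^ 2 ≤ (∑ a, ∑ b, ‖G a b‖ ^ 2) * ∑ b, ‖v b‖ ^ 2 := by
    rw [Finset.sum_mul]
    refine Finset.sum_le_sum fun a _ => ?_
    calc ‖(G *ᵥ v) a‖ ^ 2 ≤ (∑ b, ‖G a b‖ * ‖v b‖) ^ 2 := by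
          gcongr
          simpa [Matrix.mulVec, dotProduct] using
            norm_sum_le Finset.univ fun b => G a b * v b
      _ ≤ _ := Finset.sum_mul_sq_le_sq_mul_sq _ _ _
  rw [h1]
  exact_mod_cast (by nlinarith : 0 < ∑ a, ‖v a‖ ^ 2 - ∑ a, ‖(G *ᵥ v) a‖ ^ 2)

theorem norm_apply_lt_one_of_posDef {ι : Type*} [Fintype ι] [DecidableEq ι] {G : Matrix ι ι ℂ}
    (h : (1 - Gᴴ * G).PosDef) (a b : ι) : ‖G a b‖ < 1 := by
  have h1 := h.diag_pos (i := b)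
  have h2 : (1 - Gᴴ * G) b b = ((1 - ∑ c, ‖G c b‖ ^ 2 : ℝ) : ℂ) := by
    simp [Matrix.mul_apply, Complex.conj_mul']
  rw [h2] at h1
  have h3 : 0 < 1 - ∑ c, ‖G c b‖ ^ 2 := by exact_mod_cast h1
  have h4 := Finset.single_le_sum (f := fun c => ‖G c b‖ ^ 2) (fun _ _ => by positivity)
    (Finset.mem_univ a)
  nlinarith [norm_nonneg (G a b)]

/-- The continuous function of which the weight is the restriction to the support. -/
noncomputable def rawWeight (n : ℕ) (β₁ β₂ : ℝ) (x : Fin n → Fin n → ℂ × ℂ) : ℝ :=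
  (((quatMatrix n x)ᴴ * quatMatrix n x).det.re) ^ β₁ *
    ((1 - (quatMatrix n x)ᴴ * quatMatrix n x).det.re) ^ β₂

theorem continuous_rawWeight (hβ₁ : 0 ≤ β₁) (hβ₂ : 0 ≤ β₂) : Continuous (rawWeight n β₁ β₂) := by
  have hG := continuous_quatMatrix (n := n)
  unfold rawWeight
  refine Continuous.mul ?_ ?_
  · refine Continuous.rpow_const ?_ fun _ => Or.inr hβ₁
    exact Complex.continuous_re.comp (hG.matrix_conjTranspose.matrix_mul hG).matrix_det
  · refine Continuous.rpow_const ?_ fun _ => Or.inr hβ₂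
    exact Complex.continuous_re.comp
      (continuous_const.sub (hG.matrix_conjTranspose.matrix_mul hG)).matrix_det

/-- The support of the ensemble. -/
def ensembleSupport (n : ℕ) : Set (Fin n → Fin n → ℂ × ℂ) :=
  {x | (1 - (quatMatrix n x)ᴴ * quatMatrix n x).PosDef}

theorem measurableSet_ensembleSupport : MeasurableSet (ensembleSupport n) := by
  have hG := continuous_quatMatrix (n := n)
  have hA : Continuous fun x => 1 - (quatMatrix n x)ᴴ * quatMatrix n x :=
    continuous_const.sub (hG.matrix_conjTranspose.matrix_mul hG)
  have h : ensembleSupport n =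
      (⋂ v : Fin n × Fin 2 → ℂ,
        {x | 0 ≤ star v ⬝ᵥ ((1 - (quatMatrix n x)ᴴ * quatMatrix n x) *ᵥ v)}) ∩
      {x | (1 - (quatMatrix n x)ᴴ * quatMatrix n x).det ≠ 0} := by
    ext x
    simp only [ensembleSupport, Set.mem_ofPred_eq, Set.mem_inter_iff, Set.mem_iInter]
    constructor
    · exact fun hx => ⟨hx.posSemidef.dotProduct_mulVec_nonneg, hx.det_pos.ne'⟩
    · rintro ⟨h1, h2⟩
      refine (Matrix.PosSemidef.posDef_iff_isUnit (.of_dotProduct_mulVec_nonneg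
        (Matrix.isHermitian_one.sub (Matrix.isHermitian_conjTranspose_mul_self _)) h1)).mpr ?_
      exact (Matrix.isUnit_iff_isUnit_det _).mpr (isUnit_iff_ne_zero.mpr h2)
  rw [h]
  refine (isClosed_iInter fun v => ?_).measurableSet.inter ?_
  · exact isClosed_le continuous_const
      (continuous_const.dotProduct (hA.matrix_mulVec continuous_const))
  · exact (isOpen_ne_fun hA.matrix_det continuous_const).measurableSet

theorem ensembleSupport_subset_closedBall :
    ensembleSupport n ⊆ Metric.closedBall 0 1 := by
  intro x hx
  rw [mem_closedBall_zero_iff, pi_norm_le_iff_of_nonneg zero_le_one]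
  intro j
  rw [pi_norm_le_iff_of_nonneg zero_le_one]
  intro k
  have h0 := norm_apply_lt_one_of_posDef hx (j, 0) (k, 0)
  have h1 := norm_apply_lt_one_of_posDef hx (j, 0) (k, 1)
  simp only [quatMatrix, Matrix.of_apply] at h0 h1
  rw [Prod.norm_def]
  exact max_le (by simpa using h0.le) (by simpa using h1.le)

theorem weight_eq : quatAntiSphericalWeight n β₁ β₂ =
    (ensembleSupport n).indicator (rawWeight n β₁ β₂) := rfl

theorem integrable_weight_mul (hβ₁ : 0 ≤ β₁) (hβ₂ : 0 ≤ β₂)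
    {F : (Fin n → Fin n → ℂ × ℂ) → ℂ} (hF : Continuous F) :
    Integrable fun x => (quatAntiSphericalWeight n β₁ β₂ x : ℂ) * F x := by
  have h : (fun x => (quatAntiSphericalWeight n β₁ β₂ x : ℂ) * F x) =
      (ensembleSupport n).indicator fun x => (rawWeight n β₁ β₂ x : ℂ) * F x := by
    ext x
    by_cases hx : x ∈ ensembleSupport n <;> simp [weight_eq, hx]
  rw [h, integrable_indicator_iff measurableSet_ensembleSupport]
  refine IntegrableOn.mono_set ?_ ensembleSupport_subset_closedBall
  exact ((Complex.continuous_ofReal.comp (continuous_rawWeight hβ₁ hβ₂)).mul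
    hF).continuousOn.integrableOn_compact (isCompact_closedBall _ _)

theorem integrable_weight (hβ₁ : 0 ≤ β₁) (hβ₂ : 0 ≤ β₂) :
    Integrable (quatAntiSphericalWeight n β₁ β₂) := by
  rw [weight_eq, integrable_indicator_iff measurableSet_ensembleSupport]
  exact ((continuous_rawWeight hβ₁ hβ₂).continuousOn.integrableOn_compact
    (isCompact_closedBall 0 1)).mono_set ensembleSupport_subset_closedBall

theorem det_conjTranspose_mul_self_re (x : Fin n → Fin n → ℂ × ℂ) :
    ((quatMatrix n x)ᴴ * quatMatrix n x).det.re = ‖(quatMatrix n x).det‖ ^ 2 := by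
  rw [Matrix.det_mul, Matrix.det_conjTranspose, Complex.star_def, Complex.conj_mul']
  norm_cast

theorem weight_nonneg (x : Fin n → Fin n → ℂ × ℂ) : 0 ≤ quatAntiSphericalWeight n β₁ β₂ x := by
  rw [weight_eq]
  refine Set.indicator_nonneg (fun y hy => ?_) x
  refine mul_nonneg (Real.rpow_nonneg ?_ _)
    (Real.rpow_nonneg (Complex.pos_iff.mp (Matrix.PosDef.det_pos hy)).1.le _)
  rw [det_conjTranspose_mul_self_re]
  positivity

theorem integral_weight_pos (hn : 0 < n) (hβ₁ : 0 ≤ β₁) (hβ₂ : 0 ≤ β₂) :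
    0 < ∫ x, quatAntiSphericalWeight n β₁ β₂ x := by
  rw [integral_pos_iff_support_of_nonneg weight_nonneg (integrable_weight hβ₁ hβ₂)]
  have hG := continuous_quatMatrix (n := n)
  set U : Set (Fin n → Fin n → ℂ × ℂ) :=
    {x | ∑ a, ∑ b, ‖quatMatrix n x a b‖ ^ 2 < 1} ∩ {x | (quatMatrix n x).det ≠ 0} with hU
  have hUo : IsOpen U := by
    refine IsOpen.inter (isOpen_lt ?_ continuous_const)
      (isOpen_ne_fun hG.matrix_det continuous_const)
    exact continuous_finsetSum _ fun a _ => continuous_finsetSum _ fun b _ =>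
      ((hG.matrix_elem a b).norm).pow 2
  have hUsub : U ⊆ Function.support (quatAntiSphericalWeight n β₁ β₂) := by
    rintro x ⟨hx1, hx2⟩
    have hx := posDef_one_sub_of_sum_lt_one _ hx1
    rw [Function.mem_support, weight_eq, Set.indicator_of_mem (show x ∈ ensembleSupport n from hx)]
    refine (mul_pos (Real.rpow_pos_of_pos ?_ _)
      (Real.rpow_pos_of_pos (Complex.pos_iff.mp hx.det_pos).1 _)).ne'
    rw [det_conjTranspose_mul_self_re]
    exact pow_pos (norm_pos_iff.mpr hx2) 2
  have hn' : (1 : ℝ) ≤ n := by exact_mod_cast hn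
  have hUne : U.Nonempty := by
    let c : ℝ := 1 / (2 * n)
    have hc : 0 < c := by positivity
    let x₀ : Fin n → Fin n → ℂ × ℂ := fun j k => if j = k then ((c : ℂ), 0) else 0
    have hx₀ : quatMatrix n x₀ = Matrix.diagonal fun _ => (c : ℂ) := by
      ext ⟨j, a⟩ ⟨k, b⟩
      by_cases hjk : j = k <;> fin_cases a <;> fin_cases b <;>
        simp [quatMatrix, x₀, hjk]
    refine ⟨x₀, ?_, ?_⟩
    · simp only [Set.mem_ofPred_eq, hx₀]
      have : ∀ a b : Fin n × Fin 2, ‖Matrix.diagonal (fun _ => (c : ℂ)) a b‖ ^ 2 =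
          if a = b then c ^ 2 else 0 := by
        intro a b
        by_cases hab : a = b <;> simp [hab]
      simp only [this, Finset.sum_ite_eq, Finset.mem_univ, if_true, Finset.sum_const,
        Finset.card_univ, Fintype.card_prod, Fintype.card_fin, nsmul_eq_mul]
      have : ((n * 2 : ℕ) : ℝ) * c ^ 2 = 1 / (2 * n) := by
        simp only [c]
        push_cast
        field_simp
      rw [this, div_lt_one (by positivity)]
      linarith
    · simp only [Set.mem_ofPred_eq, hx₀, Matrix.det_diagonal]
      exact Finset.prod_ne_zero_iff.mpr fun _ _ => by exact_mod_cast hc.ne'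
  exact (hUo.measure_pos volume hUne).trans_le (measure_mono hUsub)

/-- The unnormalized average of `F` over the ensemble. -/
noncomputable def weightedIntegral (n : ℕ) (β₁ β₂ : ℝ)
    (F : Matrix (Fin n × Fin 2) (Fin n × Fin 2) ℂ → ℂ) : ℂ :=
  ∫ x : Fin n → Fin n → ℂ × ℂ, (quatAntiSphericalWeight n β₁ β₂ x : ℂ) * F (quatMatrix n x)

theorem weightedIntegral_sum {κ : Type*} (hβ₁ : 0 ≤ β₁) (hβ₂ : 0 ≤ β₂) (s : Finset κ)
    {F : κ → Matrix (Fin n × Fin 2) (Fin n × Fin 2) ℂ → ℂ} (hF : ∀ k, Continuous (F k)) :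
    weightedIntegral n β₁ β₂ (fun G => ∑ k ∈ s, F k G) =
      ∑ k ∈ s, weightedIntegral n β₁ β₂ (F k) := by
  unfold weightedIntegral
  simp_rw [Finset.mul_sum]
  exact integral_finsetSum _ fun k _ =>
    integrable_weight_mul hβ₁ hβ₂ ((hF k).comp continuous_quatMatrix)

theorem weightedIntegral_const_mul (c : ℂ)
    (F : Matrix (Fin n × Fin 2) (Fin n × Fin 2) ℂ → ℂ) :
    weightedIntegral n β₁ β₂ (fun G => c * F G) = c * weightedIntegral n β₁ β₂ F := by
  unfold weightedIntegral
  rw [← integral_const_mul]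
  congr 1
  ext x
  ring

theorem conjTranspose_rowAct_mul_rowAct {ι : Type*} [Fintype ι] {s : ι → ℂ}
    (hs : ∀ v, ‖s v‖ = 1) (τ : Equiv.Perm ι) (G : Matrix ι ι ℂ) :
    (rowAct s τ G)ᴴ * rowAct s τ G = Gᴴ * G := by
  ext v w
  simp only [Matrix.mul_apply, Matrix.conjTranspose_apply, rowAct, Matrix.of_apply]
  rw [← Equiv.sum_comp τ fun j => star (G j v) * G j w]
  refine Finset.sum_congr rfl fun j _ => ?_
  have : star (s j) * s j = 1 := by
    rw [Complex.star_def, Complex.conj_mul', hs]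
    norm_num
  rw [star_mul', mul_mul_mul_comm, this, one_mul]

theorem weightedIntegral_comp_rowAct (hβ₁ : 0 ≤ β₁) (hβ₂ : 0 ≤ β₂) {s : Fin n × Fin 2 → ℂ}
    (hs : ∀ v, ‖s v‖ = 1) {τ : Equiv.Perm (Fin n × Fin 2)}
    {T : (Fin n → Fin n → ℂ × ℂ) → Fin n → Fin n → ℂ × ℂ} (hT : MeasurePreserving T)
    (hTG : ∀ x, quatMatrix n (T x) = rowAct s τ (quatMatrix n x))
    {F : Matrix (Fin n × Fin 2) (Fin n × Fin 2) ℂ → ℂ} (hF : Continuous F) :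
    weightedIntegral n β₁ β₂ (fun G => F (rowAct s τ G)) = weightedIntegral n β₁ β₂ F := by
  have hw : ∀ x, quatAntiSphericalWeight n β₁ β₂ (T x) = quatAntiSphericalWeight n β₁ β₂ x := by
    intro x
    have h1 : (quatMatrix n (T x))ᴴ * quatMatrix n (T x) =
        (quatMatrix n x)ᴴ * quatMatrix n x := by
      rw [hTG, conjTranspose_rowAct_mul_rowAct hs]
    have h2 : T x ∈ ensembleSupport n ↔ x ∈ ensembleSupport n := by
      simp only [ensembleSupport, Set.mem_ofPred_eq, h1]
    by_cases hx : x ∈ ensembleSupport n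
    · simp only [weight_eq, Set.indicator_of_mem hx, Set.indicator_of_mem (h2.mpr hx),
        rawWeight, h1]
    · simp only [weight_eq, Set.indicator_of_notMem hx,
        Set.indicator_of_notMem (mt h2.mp hx)]
  unfold weightedIntegral
  have h := (integrable_weight_mul hβ₁ hβ₂
    (hF.comp (continuous_quatMatrix (n := n)))).aestronglyMeasurable
  have h3 := integral_map hT.measurable.aemeasurable (by rw [hT.map_eq]; exact h)
  rw [hT.map_eq] at h3
  simp only [Function.comp_apply, hw, hTG] at h3
  exact h3.symm

/-- Applying a map to the quaternions of row `i`. -/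
theorem measurePreserving_row {f : ℂ × ℂ → ℂ × ℂ} (hf : MeasurePreserving f) (i : Fin n) :
    MeasurePreserving fun (x : Fin n → Fin n → ℂ × ℂ) j k =>
      if j = i then f (x j k) else x j k := by
  have h : ∀ j : Fin n, MeasurePreserving
      fun (r : Fin n → ℂ × ℂ) k => if j = i then f (r k) else r k := by
    intro j
    by_cases hj : j = i
    · simp only [hj, if_true]
      exact volume_preserving_pi fun _ => hf
    · simp only [hj, if_false]
      exact MeasurePreserving.id _
  exact volume_preserving_pi h

/-- The row factors of left multiplication of block row `i` by the quaternion `i`. -/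
noncomputable def phase (i : Fin n) (v : Fin n × Fin 2) : ℂ :=
  if v.1 = i then (if v.2 = 0 then Complex.I else -Complex.I) else 1

/-- The row factors in left multiplication of block row `i` by the quaternion `j`. -/
noncomputable def flipSign (i : Fin n) (v : Fin n × Fin 2) : ℂ :=
  if v = (i, 1) then -1 else 1

theorem weightedIntegral_comp_phase (hβ₁ : 0 ≤ β₁) (hβ₂ : 0 ≤ β₂) (i : Fin n)
    {F : Matrix (Fin n × Fin 2) (Fin n × Fin 2) ℂ → ℂ} (hF : Continuous F) :
    weightedIntegral n β₁ β₂ (fun G => F (rowAct (phase i) 1 G)) =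
      weightedIntegral n β₁ β₂ F := by
  have hrot : MeasurePreserving fun z : ℂ => Complex.I * z :=
    (rotation ⟨Complex.I, by simp [Submonoid.unitSphere]⟩).measurePreserving
  have hf : MeasurePreserving fun p : ℂ × ℂ => (Complex.I * p.1, Complex.I * p.2) :=
    hrot.prod hrot
  refine weightedIntegral_comp_rowAct hβ₁ hβ₂ (fun v => ?_) (measurePreserving_row hf i)
    (fun x => ?_) hF
  · unfold phase
    split_ifs <;> simp
  · ext ⟨j, a⟩ ⟨k, b⟩
    by_cases hj : j = i <;> fin_cases a <;> fin_cases b <;>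
      simp [quatMatrix, rowAct, phase, hj]

theorem weightedIntegral_comp_flip (hβ₁ : 0 ≤ β₁) (hβ₂ : 0 ≤ β₂) (i : Fin n)
    {F : Matrix (Fin n × Fin 2) (Fin n × Fin 2) ℂ → ℂ} (hF : Continuous F) :
    weightedIntegral n β₁ β₂
      (fun G => F (rowAct (flipSign i) (Equiv.swap (i, 0) (i, 1)) G)) =
        weightedIntegral n β₁ β₂ F := by
  have hconj : MeasurePreserving fun z : ℂ => (starRingEnd ℂ) z :=
    Complex.conjLIE.measurePreserving
  have hneg : MeasurePreserving fun z : ℂ => -(starRingEnd ℂ) z :=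
    (Complex.conjLIE.trans (LinearIsometryEquiv.neg ℝ)).measurePreserving
  have hf : MeasurePreserving
      fun p : ℂ × ℂ => (-(starRingEnd ℂ) p.2, (starRingEnd ℂ) p.1) :=
    (hneg.prod hconj).comp Measure.measurePreserving_swap
  refine weightedIntegral_comp_rowAct hβ₁ hβ₂ (fun v => ?_) (measurePreserving_row hf i)
    (fun x => ?_) hF
  · unfold flipSign
    split_ifs <;> simp
  · ext ⟨j, a⟩ ⟨k, b⟩
    by_cases hj : j = i
    · subst hj
      fin_cases a <;> fin_cases b <;> simp [quatMatrix, rowAct, flipSign]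
    · have h : Equiv.swap (i, (0 : Fin 2)) (i, 1) (j, a) = (j, a) :=
        Equiv.swap_apply_of_ne_of_ne (by simp [hj]) (by simp [hj])
      simp [quatMatrix, rowAct, flipSign, hj, h]

theorem weightedIntegral_comp_swap (hβ₁ : 0 ≤ β₁) (hβ₂ : 0 ≤ β₂) (i k : Fin n)
    {F : Matrix (Fin n × Fin 2) (Fin n × Fin 2) ℂ → ℂ} (hF : Continuous F) :
    weightedIntegral n β₁ β₂
      (fun G => F (rowAct 1 (Equiv.prodCongrLeft fun _ => Equiv.swap i k) G)) =
        weightedIntegral n β₁ β₂ F := by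
  have hT : MeasurePreserving fun (x : Fin n → Fin n → ℂ × ℂ) j => x (Equiv.swap i k j) :=
    volume_preserving_arrowCongr' (Equiv.swap i k).symm
      (MeasurableEquiv.refl (Fin n → ℂ × ℂ)) (MeasurePreserving.id _)
  refine weightedIntegral_comp_rowAct hβ₁ hβ₂ (by simp) hT (fun x => ?_) hF
  ext ⟨j, a⟩ ⟨l, b⟩
  simp [quatMatrix, rowAct]

theorem prod_phase (i : Fin n) (S : Finset (Fin n × Fin 2)) :
    ∏ v ∈ S, phase i v =
      (if (i, 0) ∈ S then Complex.I else 1) * (if (i, 1) ∈ S then -Complex.I else 1) := by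
  have h : ∏ v ∈ S, phase i v = ∏ v, if v ∈ S then phase i v else 1 := by simp
  rw [h, Fintype.prod_prod_type, Finset.prod_eq_single i]
  · simp [Fin.prod_univ_two, phase]
  · intro j _ hj
    simp [phase, hj]
  · simp

theorem weightedIntegral_eq_zero_of_phase (hβ₁ : 0 ≤ β₁) (hβ₂ : 0 ≤ β₂) (i : Fin n)
    {F : Matrix (Fin n × Fin 2) (Fin n × Fin 2) ℂ → ℂ} (hF : Continuous F) {p : ℂ} (hp : p ≠ 1)
    (h : ∀ G, F (rowAct (phase i) 1 G) = p * F G) : weightedIntegral n β₁ β₂ F = 0 := by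
  have h1 := weightedIntegral_comp_phase hβ₁ hβ₂ i hF
  simp_rw [h] at h1
  rw [weightedIntegral_const_mul] at h1
  have h2 : (p - 1) * weightedIntegral n β₁ β₂ F = 0 := by
    rw [sub_mul, h1]
    ring
  exact (mul_eq_zero.mp h2).resolve_left (sub_ne_zero.mpr hp)

theorem I_ne_one : Complex.I ≠ 1 := fun h => by simpa using congrArg Complex.re h

theorem neg_I_ne_one : -Complex.I ≠ 1 := fun h => by simpa using congrArg Complex.re h

theorem prod_phase_ne_one {i : Fin n} {S : Finset (Fin n × Fin 2)}
    (hi : ¬((i, 0) ∈ S ↔ (i, 1) ∈ S)) : ∏ v ∈ S, phase i v ≠ 1 := by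
  rw [prod_phase]
  by_cases h0 : (i, 0) ∈ S <;> by_cases h1 : (i, 1) ∈ S <;>
    simp_all [I_ne_one, neg_I_ne_one]

theorem prod_phase_mul_phase_ne_one {c : Fin n × Fin 2} {S : Finset (Fin n × Fin 2)}
    (hc : c ∈ S) : (∏ v ∈ S, phase c.1 v) * phase c.1 c ≠ 1 := by
  obtain ⟨i, a⟩ := c
  have h2 : (-1 : ℂ) ≠ 1 := by norm_num
  rw [prod_phase]
  fin_cases a <;> by_cases h0 : (i, 0) ∈ S <;> by_cases h1 : (i, 1) ∈ S <;>
    simp_all [phase, I_ne_one, neg_I_ne_one]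

theorem weightedIntegral_rowPattern_mul_diag (hβ₁ : 0 ≤ β₁) (hβ₂ : 0 ≤ β₂) (z : ℂ)
    {S : Finset (Fin n × Fin 2)} {c : Fin n × Fin 2} (hc : c ∈ S) :
    weightedIntegral n β₁ β₂ (fun G => (rowPattern z S G).det * G c c) = 0 := by
  refine weightedIntegral_eq_zero_of_phase hβ₁ hβ₂ c.1 (by fun_prop)
    (prod_phase_mul_phase_ne_one hc) fun G => ?_
  rw [det_rowPattern_rowAct]
  simp only [rowAct, Matrix.of_apply, Equiv.Perm.one_apply]
  ring

theorem weightedIntegral_projPattern_flip (hβ₁ : 0 ≤ β₁) (hβ₂ : 0 ≤ β₂) (z : ℂ)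
    {S : Finset (Fin n × Fin 2)} {i : Fin n} (h0 : (i, 0) ∈ S) (h1 : (i, 1) ∈ S)
    (c : Fin n × Fin 2) :
    weightedIntegral n β₁ β₂ (fun G => (projPattern z S (i, 1) c G).det) =
      weightedIntegral n β₁ β₂ (fun G => (projPattern z S (i, 0) c G).det) := by
  rw [← weightedIntegral_comp_flip hβ₁ hβ₂ i (continuous_det_projPattern z S (i, 0) c)]
  congr 1
  ext G
  rw [det_projPattern_rowAct_perm, Equiv.swap_apply_left]
  · rwa [Equiv.swap_apply_left]
  · exact fun v hv => Equiv.swap_apply_of_ne_of_ne (fun h : v = (i, 0) => hv (h ▸ h0))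
      (fun h : v = (i, 1) => hv (h ▸ h1))
  · exact fun v hv => if_neg fun h : v = (i, 1) => hv (h ▸ h1)
  · rw [Equiv.Perm.sign_swap (by simp)]
    simp [flipSign]

theorem weightedIntegral_projPattern_swap (hβ₁ : 0 ≤ β₁) (hβ₂ : 0 ≤ β₂) (z : ℂ)
    {S : Finset (Fin n × Fin 2)} (hS : ∀ j, (j, 0) ∈ S ↔ (j, 1) ∈ S) {i k : Fin n}
    (hi : (i, 0) ∈ S) (hk : (k, 0) ∈ S) (c : Fin n × Fin 2) :
    weightedIntegral n β₁ β₂ (fun G => (projPattern z S (k, 0) c G).det) =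
      weightedIntegral n β₁ β₂ (fun G => (projPattern z S (i, 0) c G).det) := by
  rw [← weightedIntegral_comp_swap hβ₁ hβ₂ i k (continuous_det_projPattern z S (i, 0) c)]
  congr 1
  ext G
  rw [det_projPattern_rowAct_perm]
  · simp
  · simpa using hk
  · rintro ⟨j, a⟩ hv
    have hj : (j, 0) ∉ S := by
      fin_cases a
      · exact hv
      · exact fun h => hv ((hS j).mp h)
    simp [Equiv.swap_apply_of_ne_of_ne (fun h : j = i => hj (h ▸ hi))
      (fun h : j = k => hj (h ▸ hk))]
  · simp
  · rw [Equiv.Perm.sign_prodCongrLeft]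
    rcases Int.units_eq_one_or (Equiv.Perm.sign (Equiv.swap i k)) with h | h <;> simp [h]

theorem sum_weightedIntegral_projPattern (hβ₁ : 0 ≤ β₁) (hβ₂ : 0 ≤ β₂) (z : ℂ)
    {S : Finset (Fin n × Fin 2)} (hne : S.Nonempty) :
    ∑ c ∈ S, weightedIntegral n β₁ β₂ (fun G => (projPattern z S c c G).det) =
      weightedIntegral n β₁ β₂ (fun G => (rowPattern z S G).det) := by
  by_cases hS : ∀ j, (j, 0) ∈ S ↔ (j, 1) ∈ S
  · obtain ⟨⟨i, a⟩, hu⟩ := hne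
    have hi : (i, 0) ∈ S := by
      fin_cases a
      · exact hu
      · exact (hS i).mpr hu
    have h : ∀ c ∈ S, weightedIntegral n β₁ β₂ (fun G => (projPattern z S c c G).det) =
        weightedIntegral n β₁ β₂ (fun G => (projPattern z S (i, 0) c G).det) := by
      rintro ⟨k, b⟩ hk
      fin_cases b
      · exact weightedIntegral_projPattern_swap hβ₁ hβ₂ z hS hi hk _
      · have hk0 := (hS k).mpr hk
        exact (weightedIntegral_projPattern_flip hβ₁ hβ₂ z hk0 hk _).trans
          (weightedIntegral_projPattern_swap hβ₁ hβ₂ z hS hi hk0 _)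
    rw [Finset.sum_congr rfl h, ← weightedIntegral_sum hβ₁ hβ₂ S fun c => by fun_prop]
    simp_rw [sum_det_projPattern z hi]
  · push Not at hS
    obtain ⟨i, hi⟩ := hS
    have hi' : ¬((i, 0) ∈ S ↔ (i, 1) ∈ S) := by tauto
    rw [weightedIntegral_eq_zero_of_phase hβ₁ hβ₂ i (continuous_det_rowPattern z S)
      (prod_phase_ne_one hi') fun G => det_rowPattern_rowAct z S _ G]
    exact Finset.sum_eq_zero fun c hc => weightedIntegral_eq_zero_of_phase hβ₁ hβ₂ i
      (continuous_det_projPattern z S c c) (prod_phase_ne_one hi')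
      fun G => det_projPattern_rowAct z hc c _ G

theorem sum_notMem_insert_eq_sum_mem {ι M : Type*} [Fintype ι] [DecidableEq ι] [AddCommMonoid M]
    (f : Finset ι → ι → M) :
    ∑ S : Finset ι, ∑ c with c ∉ S, f (insert c S) c = ∑ S : Finset ι, ∑ c ∈ S, f S c := by
  rw [Finset.sum_sigma', Finset.sum_sigma']
  refine Finset.sum_bij' (fun p _ => ⟨insert p.2 p.1, p.2⟩) (fun p _ => ⟨p.1.erase p.2, p.2⟩)
    ?_ ?_ ?_ ?_ ?_
  · simp
  · simp
  · rintro ⟨S, c⟩ h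
    simp only [Finset.mem_sigma, Finset.mem_filter, Finset.mem_univ, true_and] at h
    simp [Finset.erase_insert h]
  · rintro ⟨S, c⟩ h
    simp only [Finset.mem_sigma, Finset.mem_univ, true_and] at h
    simp [Finset.insert_erase h]
  · simp

theorem weightedIntegral_det_mul_trace (hβ₁ : 0 ≤ β₁) (hβ₂ : 0 ≤ β₂) (z : ℂ) :
    weightedIntegral n β₁ β₂ (fun G => (z • 1 - G).det * G.trace) =
      -(z * ∑ S : Finset (Fin n × Fin 2),
        ∑ c ∈ S, weightedIntegral n β₁ β₂ (fun G => (projPattern z S c c G).det)) := by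
  have h1 : (fun G : Matrix (Fin n × Fin 2) (Fin n × Fin 2) ℂ => (z • 1 - G).det * G.trace) =
      fun G => ∑ S, ∑ c, (rowPattern z S G).det * G c c := by
    ext G
    rw [det_sub_eq_sum_rowPattern, Matrix.trace, Finset.sum_mul_sum]
    rfl
  have h2 : ∀ S : Finset (Fin n × Fin 2),
      weightedIntegral n β₁ β₂ (fun G => ∑ c, (rowPattern z S G).det * G c c) =
      ∑ c with c ∉ S, -(z * weightedIntegral n β₁ β₂
        (fun G => (projPattern z (insert c S) c c G).det)) := by
    intro S
    rw [weightedIntegral_sum hβ₁ hβ₂ _ fun c => by fun_prop, Finset.sum_filter]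
    refine Finset.sum_congr rfl fun c _ => ?_
    by_cases hc : c ∈ S
    · simp [hc, weightedIntegral_rowPattern_mul_diag hβ₁ hβ₂ z hc]
    · simp_rw [det_rowPattern_mul_diag z hc, ← neg_mul]
      rw [weightedIntegral_const_mul, if_pos hc]
  rw [h1, weightedIntegral_sum hβ₁ hβ₂ _ fun S => by fun_prop]
  simp_rw [h2]
  rw [sum_notMem_insert_eq_sum_mem fun S c =>
    -(z * weightedIntegral n β₁ β₂ (fun G => (projPattern z S c c G).det))]
  simp only [Finset.sum_neg_distrib, Finset.mul_sum]

theorem weightedIntegral_det_add_det_mul_trace (hβ₁ : 0 ≤ β₁) (hβ₂ : 0 ≤ β₂) (z : ℂ) :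
    z * weightedIntegral n β₁ β₂ (fun G => (z • 1 - G).det) +
      weightedIntegral n β₁ β₂ (fun G => (z • 1 - G).det * G.trace) =
        z ^ (2 * n + 1) * ((∫ x, quatAntiSphericalWeight n β₁ β₂ x : ℝ) : ℂ) := by
  rw [weightedIntegral_det_mul_trace hβ₁ hβ₂]
  simp_rw [det_sub_eq_sum_rowPattern]
  rw [weightedIntegral_sum hβ₁ hβ₂ _ fun S => by fun_prop, ← sub_eq_add_neg, ← mul_sub,
    ← Finset.sum_sub_distrib, Finset.sum_eq_single ∅]
  · simp only [det_rowPattern_empty, Finset.sum_empty, sub_zero, weightedIntegral]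
    rw [integral_mul_const, integral_complex_ofReal]
    simp only [Fintype.card_prod, Fintype.card_fin]
    ring
  · intro S _ hS
    rw [sum_weightedIntegral_projPattern hβ₁ hβ₂ z (Finset.nonempty_iff_ne_empty.mpr hS),
      sub_self]
  · simp

end Ensemble

end QuatAntiSpherical

/-- The odd-degree skew orthogonal polynomial for the quaternion real anti-spherical
ensemble is a monomial: `z ⟨det (z I - G)⟩ + ⟨det (z I - G) Tr G⟩ = z^(2n+1)`. -/
theorem quatAntiSpherical_odd_skew_orthogonal_poly (n : ℕ) (hn : 0 < n)
    (β₁ β₂ : ℝ) (hβ₁ : 0 ≤ β₁) (hβ₂ : 0 ≤ β₂) (z : ℂ) :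
    z * ((∫ x : Fin n → Fin n → ℂ × ℂ,
          (quatAntiSphericalWeight n β₁ β₂ x : ℂ) *
            (z • (1 : Matrix (Fin n × Fin 2) (Fin n × Fin 2) ℂ) - quatMatrix n x).det) /
        ((∫ x : Fin n → Fin n → ℂ × ℂ, quatAntiSphericalWeight n β₁ β₂ x : ℝ) : ℂ))
      + (∫ x : Fin n → Fin n → ℂ × ℂ,
          (quatAntiSphericalWeight n β₁ β₂ x : ℂ) *
            ((z • (1 : Matrix (Fin n × Fin 2) (Fin n × Fin 2) ℂ) - quatMatrix n x).det
              * (quatMatrix n x).trace)) /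
        ((∫ x : Fin n → Fin n → ℂ × ℂ, quatAntiSphericalWeight n β₁ β₂ x : ℝ) : ℂ)
      = z ^ (2 * n + 1) := by
  have hpos := QuatAntiSpherical.integral_weight_pos hn hβ₁ hβ₂
  have hne : ((∫ x, quatAntiSphericalWeight n β₁ β₂ x : ℝ) : ℂ) ≠ 0 := by
    exact_mod_cast hpos.ne'
  have h := QuatAntiSpherical.weightedIntegral_det_add_det_mul_trace (n := n) hβ₁ hβ₂ z
  rw [← mul_div_assoc, ← add_div, div_eq_iff hne]
  exact h
end
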